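/- arXiv:math/0203167 — 2 statements merged into one kernel-verified Lean document; each statement's English description precedes it below -/
import Mathlib

section
/- (Dehornoy) Every braid word in the generators σ_1, …, σ_{n−1} is equivalent (i.e., represents the same element of the braid group B_n) to a braid word that is either σ_1-nonnegative or σ_1-negative. -/
/-- The defining relations of the braid group on `m + 1` strands (`m` generators
`σ_1, …, σ_m`, indexed here by `Fin m`): the commutation relations
`σ_i σ_j = σ_j σ_i` for `|i - j| > 1` and the braid relations
`σ_i σ_{i+1} σ_i = σ_{i+1} σ_i σ_{i+1}`. -/
def braidRels (m : ℕ) : Set (FreeGroup (Fin m)) :=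
  {r | (∃ i j : Fin m, (i : ℕ) + 1 < (j : ℕ) ∧
        r = FreeGroup.of i * FreeGroup.of j * (FreeGroup.of i)⁻¹ * (FreeGroup.of j)⁻¹) ∨
       (∃ i j : Fin m, (i : ℕ) + 1 = (j : ℕ) ∧
        r = FreeGroup.of i * FreeGroup.of j * FreeGroup.of i *
            (FreeGroup.of j * FreeGroup.of i * FreeGroup.of j)⁻¹)}

/-- The index in `Fin n` of the generator `x_i` of `F_n` acted on by `σ_i`
(the strand index `i`, `0`-based). -/
def xL (n : ℕ) (i : Fin (n - 1)) : Fin n := ⟨i, by have := i.isLt; omega⟩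

/-- The index in `Fin n` of the generator `x_{i+1}` of `F_n` acted on by `σ_i`. -/
def xR (n : ℕ) (i : Fin (n - 1)) : Fin n := ⟨(i : ℕ) + 1, by have := i.isLt; omega⟩

/-!
Artin's action of the braid group on the free group on `x_0, x_1, …` maps every generator to a
conjugate of a generator and fixes `x_0 x_1 ⋯ x_m`. Suppose the reduced word of `b • x_0` starts
with `x_0`. Multiplying `b` on the right by a braid on the later strands does not change `b • x_0`,
so we may assume that the images of `x_0, …, x_m` have the least possible total length. Then the
product of the images of `x_1, …, x_m` has little cancellation, and comparing it with
`(b • x_0)⁻¹ x_0 x_1 ⋯ x_m` shows that `b • x_1 = (b σ_1⁻¹) • x_0` also starts with `x_0` and is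
shorter than `b • x_0`, unless `b • x_0 = x_0`. By induction `b` is represented by a word without
`σ_1⁻¹`: a braid fixing `x_0` is a word in `σ_2, …, σ_m`, because the windings of the first strand
around the others can be combed out of it. If `b • x_0` does not start with `x_0`, then the
image of `x_0` under the mirror image of `b` does.
-/

namespace Dehornoy

open FreeGroup (of mk norm IsReduced isReduced_toWord mk_toWord toWord_mk toWord_mul toWord_inv
  toWord_of startsWith invRev)

section ReducedWords

variable {α : Type*} [DecidableEq α] {g : FreeGroup α} {i j : α}

/-- The number of inverse letters in the reduced word of `g`. -/
def negCount (g : FreeGroup α) : ℕ :=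
  g.toWord.countP (!·.2)

lemma negCount_mul_le (g h : FreeGroup α) : negCount (g * h) ≤ negCount g + negCount h := by
  unfold negCount
  rw [← List.countP_append]
  exact (FreeGroup.toWord_mul_sublist g h).countP_le

lemma toWord_mk_of_isReduced {L : List (α × Bool)} (h : IsReduced L) : (mk L).toWord = L := by
  rw [toWord_mk, h.reduce_eq]

lemma toWord_mul_of_isReduced {g h : FreeGroup α} (hgh : IsReduced (g.toWord ++ h.toWord)) :
    (g * h).toWord = g.toWord ++ h.toWord := by
  rw [toWord_mul, hgh.reduce_eq]

lemma negCount_mul_of_isReduced {g h : FreeGroup α} (hgh : IsReduced (g.toWord ++ h.toWord)) :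
    negCount (g * h) = negCount g + negCount h := by
  simp only [negCount, toWord_mul_of_isReduced hgh, List.countP_append]

lemma negCount_add_negCount_inv (g : FreeGroup α) : negCount g + negCount g⁻¹ = norm g := by
  have hcomp : (fun c : α × Bool ↦ !c.2) ∘ (fun c : α × Bool ↦ (c.1, !c.2)) = Prod.snd := by
    ext; simp
  rw [negCount, negCount, toWord_inv, invRev, List.countP_reverse, List.countP_map, hcomp,
    FreeGroup.norm, List.length_eq_countP_add_countP (!·.2)]
  simp

lemma isReduced_append_of_or_toWord_eq (g : FreeGroup α) (i : α) :
    IsReduced (g.toWord ++ [(i, true)]) ∨ ∃ L, g.toWord = L ++ [(i, false)] := by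
  rcases List.eq_nil_or_concat g.toWord with hnil | ⟨L, ⟨l, b⟩, hL⟩
  · left; simp [hnil]
  · rw [List.concat_eq_append] at hL
    by_cases hc : l = i ∧ b = false
    · right; exact ⟨L, by rw [hL, hc.1, hc.2]⟩
    · left
      refine isReduced_toWord.append (.singleton _) ?_
      simpa [hL] using hc

lemma toWord_mul_of_of_toWord_eq {L : List (α × Bool)} (hL : g.toWord = L ++ [(i, false)]) :
    (g * of i).toWord = L := by
  have hmul : g * of i = mk L := by
    rw [← mk_toWord (x := g), hL, ← FreeGroup.mul_mk, mul_assoc]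
    exact mul_eq_left.2 (inv_mul_cancel (of i))
  rw [hmul, toWord_mk_of_isReduced]
  exact isReduced_toWord.infix ⟨[], [(i, false)], by simpa using hL.symm⟩

lemma toWord_mul_of_eq_or (g : FreeGroup α) (i : α) :
    (g * of i).toWord = g.toWord ++ [(i, true)] ∨ g.toWord = (g * of i).toWord ++ [(i, false)] := by
  rcases isReduced_append_of_or_toWord_eq g i with hred | ⟨L, hL⟩
  · left; rw [toWord_mul_of_isReduced (by simpa using hred), toWord_of]
  · right; rw [toWord_mul_of_of_toWord_eq hL, hL]

lemma mul_of_mem_startsWith_iff :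
    g * of i ∈ startsWith (j, true) ↔ g ∈ startsWith (j, true) ∨ g = 1 ∧ i = j := by
  simp only [startsWith, Set.mem_ofPred_eq, ← FreeGroup.toWord_eq_nil_iff]
  rcases toWord_mul_of_eq_or g i with h | h <;> rw [h]
  · cases g.toWord <;> simp
  · cases (g * of i).toWord <;> simp

lemma mul_prod_of_mem_startsWith_iff {l : List α} (hl : j ∉ l) :
    g * (l.map of).prod ∈ startsWith (j, true) ↔ g ∈ startsWith (j, true) := by
  induction l using List.reverseRecOn with
  | nil => simp
  | append_singleton l i ih =>
    simp only [List.mem_append, List.mem_singleton, not_or] at hl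
    rw [List.map_append, List.prod_append, ← mul_assoc, List.map_singleton, List.prod_singleton,
      mul_of_mem_startsWith_iff, ih hl.1]
    simp [Ne.symm hl.2]

lemma toWord_mul_prod_of_eq_or_negCount_lt (g : FreeGroup α) (l : List α) :
    (g * (l.map of).prod).toWord = g.toWord ++ l.map (·, true) ∨
      negCount (g * (l.map of).prod) < negCount g := by
  induction l using List.reverseRecOn with
  | nil => simp
  | append_singleton l i ih =>
    rw [List.map_append, List.prod_append, ← mul_assoc, List.map_singleton, List.prod_singleton]
    have hle : negCount (g * (l.map of).prod) ≤ negCount g :=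
      ih.elim (fun h ↦ by simp [negCount, h, Function.comp_def]) le_of_lt
    rcases toWord_mul_of_eq_or (g * (l.map of).prod) i with h | h
    · refine ih.imp (fun ih ↦ by simp [h, ih]) (fun ih ↦ ?_)
      simpa [negCount, h] using ih
    · right
      have hlt : negCount (g * (l.map of).prod * of i) < negCount (g * (l.map of).prod) := by
        rw [negCount, negCount, h]
        simp
      exact hlt.trans_le hle

end ReducedWords

section ReducedConjugators

variable {α : Type*}

lemma isReduced_invRev {L : List (α × Bool)} (h : IsReduced L) : IsReduced (invRev L) := by
  classical
  rw [FreeGroup.isReduced_iff_reduce_eq, FreeGroup.reduce_invRev, h.reduce_eq]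

lemma conj_of_inv (p : FreeGroup α) (k : α) :
    (p * of k * p⁻¹)⁻¹ = p * mk [(k, false)] * p⁻¹ :=
  conj_inv

variable [DecidableEq α] {p : FreeGroup α} {j k : α}

/-- The reduced word of `p` does not end with `x_k` or its inverse; equivalently, `p x_k p⁻¹` is
reduced as written. Every conjugate of `x_k` has a unique such conjugator. -/
def LastNe (p : FreeGroup α) (k : α) : Prop :=
  ∀ c ∈ p.toWord.getLast?, c.1 ≠ k

lemma LastNe.isReduced_append (h : LastNe p k) (b : Bool) : IsReduced (p.toWord ++ [(k, b)]) :=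
  isReduced_toWord.append (.singleton _) fun c hc _ hd hcd ↦
    absurd (by simpa [← Option.some_inj.1 hd] using hcd) (h c hc)

lemma LastNe.isReduced_cons (h : LastNe p k) (b : Bool) : IsReduced ((k, b) :: p⁻¹.toWord) := by
  simpa [invRev, toWord_inv] using isReduced_invRev (h.isReduced_append !b)

lemma LastNe.toWord_conj (h : LastNe p k) (b : Bool) :
    (p * mk [(k, b)] * p⁻¹).toWord = p.toWord ++ (k, b) :: p⁻¹.toWord := by
  have hred : IsReduced (p.toWord ++ [(k, b)] ++ p⁻¹.toWord) :=
    (h.isReduced_append b).append_overlap (h.isReduced_cons b) (by simp)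
  rw [toWord_mul, toWord_mul, toWord_mk, FreeGroup.IsReduced.singleton.reduce_eq,
    (h.isReduced_append b).reduce_eq, hred.reduce_eq, List.append_assoc, List.singleton_append]

lemma LastNe.conj_mem_startsWith_of_inv (h : LastNe p k)
    (hinv : (p * of k * p⁻¹)⁻¹ ∈ startsWith (j, true)) : p * of k * p⁻¹ ∈ startsWith (j, true) := by
  have hword : (p * of k * p⁻¹).toWord = _ := h.toWord_conj true
  rw [startsWith, Set.mem_ofPred_eq, conj_of_inv, h.toWord_conj] at hinv
  rw [startsWith, Set.mem_ofPred_eq, hword]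
  cases hp : p.toWord <;> simp_all

lemma LastNe.norm_conj (h : LastNe p k) : norm (p * of k * p⁻¹) = 2 * norm p + 1 := by
  have hword : (p * of k * p⁻¹).toWord = _ := h.toWord_conj true
  have hinv := FreeGroup.norm_inv_eq (x := p)
  rw [FreeGroup.norm] at hinv
  rw [FreeGroup.norm, hword, List.length_append, List.length_cons, hinv, FreeGroup.norm]
  omega

lemma norm_conj_of_le (p : FreeGroup α) (k : α) : norm (p * of k * p⁻¹) ≤ 2 * norm p + 1 := by
  have h₁ := FreeGroup.norm_mul_le (p * of k) p⁻¹
  have h₂ := FreeGroup.norm_mul_le p (of k)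
  rw [FreeGroup.norm_inv_eq] at h₁
  rw [FreeGroup.norm_of] at h₂
  omega

lemma exists_lastNe_mk_eq_mul_zpow (k : α) {L : List (α × Bool)} (hL : IsReduced L) :
    ∃ (q : FreeGroup α) (e : ℤ), mk L = q * of k ^ e ∧ LastNe q k := by
  induction L using List.reverseRecOn with
  | nil => exact ⟨1, 0, by simp [FreeGroup.one_eq_mk], by simp [LastNe]⟩
  | append_singleton L c ih =>
    obtain ⟨i, b⟩ := c
    rcases eq_or_ne i k with rfl | hne
    · obtain ⟨q, e, hq, hlast⟩ := ih (hL.infix ⟨[], [(i, b)], by simp⟩)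
      refine ⟨q, e + if b then 1 else -1, ?_, hlast⟩
      rw [← FreeGroup.mul_mk, hq, zpow_add, mul_assoc]
      cases b <;> simp [of, FreeGroup.inv_mk, invRev]
    · exact ⟨mk (L ++ [(i, b)]), 0, by simp, by simpa [LastNe, toWord_mk, hL.reduce_eq]⟩

lemma exists_lastNe_eq_mul_zpow (p : FreeGroup α) (k : α) :
    ∃ (q : FreeGroup α) (e : ℤ), p = q * of k ^ e ∧ LastNe q k := by
  simpa only [mk_toWord] using exists_lastNe_mk_eq_mul_zpow k (isReduced_toWord (x := p))

lemma conj_mul_zpow_self {G : Type*} [Group G] (a b : G) (e : ℤ) :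
    (a * b ^ e) * b * (a * b ^ e)⁻¹ = a * b * a⁻¹ := by
  group

lemma exists_lastNe_conj_eq (p : FreeGroup α) (k : α) :
    ∃ q, p * of k * p⁻¹ = q * of k * q⁻¹ ∧ LastNe q k := by
  obtain ⟨q, e, rfl, hq⟩ := exists_lastNe_eq_mul_zpow p k
  exact ⟨q, conj_mul_zpow_self q (of k) e, hq⟩

end ReducedConjugators

section ConjugateGenerators

variable {α : Type*} {p : FreeGroup α} {i j k : α}

lemma eq_zpow_of_conj_of_eq (h : p * of k * p⁻¹ = of k) : ∃ e : ℤ, p = of k ^ e := by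
  classical
  obtain ⟨q, e, rfl, hq⟩ := exists_lastNe_eq_mul_zpow p k
  have hnorm := hq.norm_conj
  rw [← conj_mul_zpow_self q (of k) e, h, FreeGroup.norm_of] at hnorm
  have hq_one : q = 1 := FreeGroup.norm_eq_zero.1 (by omega)
  exact ⟨e, by rw [hq_one, one_mul]⟩

lemma eq_of_isConj_of (h : IsConj (of i) (of j)) : i = j := by
  classical
  let f : FreeGroup α →* Multiplicative ℤ :=
    FreeGroup.lift fun l ↦ Multiplicative.ofAdd (if l = i then 1 else 0)
  have hf : f (of i) = f (of j) := isConj_iff_eq.1 (MonoidHom.map_isConj f h)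
  by_contra hne
  simp [f, Ne.symm hne] at hf

end ConjugateGenerators

section TightSequences

variable {α : Type*} [DecidableEq α] {p q : FreeGroup α} {j k l : α}

lemma isReduced_cons_or_toWord_eq (g : FreeGroup α) (k : α) (b : Bool) :
    IsReduced ((k, b) :: g.toWord) ∨ ∃ L, g.toWord = (k, !b) :: L := by
  rcases hg : g.toWord with _ | ⟨⟨i, c⟩, L⟩
  · left; simp
  · by_cases hc : i = k ∧ c = !b
    · right; exact ⟨L, by rw [hc.1, hc.2]⟩
    · left
      refine List.isChain_cons_cons.2 ⟨fun hki ↦ ?_, hg ▸ isReduced_toWord⟩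
      by_contra hbc
      exact hc ⟨hki.symm, Bool.eq_not_of_ne (Ne.symm hbc)⟩

lemma LastNe.isReduced_cons_of_norm_le (hp : LastNe p k) (hq : LastNe q l) (b : Bool)
    (h : norm (q * of l * q⁻¹) ≤
      norm ((p * mk [(k, b)] * p⁻¹) * (q * of l * q⁻¹) * (p * mk [(k, b)] * p⁻¹)⁻¹)) :
    IsReduced ((k, b) :: (p⁻¹ * q).toWord) := by
  -- Otherwise `q = p x_k^{∓1} L` without cancellation, and conjugation shortens `q` to `p L`.
  refine (isReduced_cons_or_toWord_eq _ k b).resolve_right fun ⟨L, hL⟩ ↦ ?_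
  have hr : p⁻¹ * q = (mk [(k, b)])⁻¹ * mk L := by
    rw [← mk_toWord (x := p⁻¹ * q), hL, FreeGroup.inv_mk, FreeGroup.mul_mk]
    rfl
  have hqr : q = p * mk ((k, !b) :: L) := by rw [← hL, mk_toWord, mul_inv_cancel_left]
  have hword : q.toWord = p.toWord ++ ((k, !b) :: L) := by
    have hred : IsReduced (p.toWord ++ [(k, !b)] ++ L) :=
      (hp.isReduced_append !b).append_overlap
        (by simpa [← hL] using isReduced_toWord) (by simp)
    rw [hqr, ← mk_toWord (x := p), FreeGroup.mul_mk, toWord_mk_of_isReduced (by simpa using hred),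
      mk_toWord]
  have hconj : (p * mk [(k, b)] * p⁻¹) * (q * of l * q⁻¹) * (p * mk [(k, b)] * p⁻¹)⁻¹ =
      (p * mk L) * of l * (p * mk L)⁻¹ := by
    rw [eq_mul_of_inv_mul_eq hr]
    group
  have hnorm : norm q = norm p + (L.length + 1) := by
    rw [FreeGroup.norm, hword, List.length_append, List.length_cons, FreeGroup.norm]
  have hle := (norm_conj_of_le (p * mk L) l).trans
    (Nat.add_le_add_right (Nat.mul_le_mul_left 2 (FreeGroup.norm_mul_le p (mk L))) 1)
  have hL := FreeGroup.norm_mk_le (L₁ := L)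
  rw [hconj, hq.norm_conj] at h
  omega

/-- A pair `(p, k)` encodes the conjugate `p x_k p⁻¹`. -/
def conjOf (c : FreeGroup α × α) : FreeGroup α :=
  c.1 * of c.2 * c.1⁻¹

/-- In the product of `p x_k p⁻¹` and `q x_l q⁻¹`, the middle part `x_k p⁻¹ q x_l` suffers no
cancellation other than inside `p⁻¹ q`. -/
def Tight (c d : FreeGroup α × α) : Prop :=
  IsReduced ((c.2, true) :: ((c.1⁻¹ * d.1).toWord ++ [(d.2, true)]))

lemma tight_of_norm_le {c d : FreeGroup α × α} (hc : LastNe c.1 c.2) (hd : LastNe d.1 d.2)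
    (hcd : norm (conjOf d) ≤ norm (conjOf c * conjOf d * (conjOf c)⁻¹))
    (hdc : norm (conjOf c) ≤ norm ((conjOf d)⁻¹ * conjOf c * conjOf d)) : Tight c d := by
  have hleft : IsReduced ([(c.2, true)] ++ (c.1⁻¹ * d.1).toWord) :=
    hc.isReduced_cons_of_norm_le hd true hcd
  have hright : IsReduced ((c.1⁻¹ * d.1).toWord ++ [(d.2, true)]) := by
    have h := hd.isReduced_cons_of_norm_le hc false (by rwa [← conj_of_inv, inv_inv])
    have hinvRev : invRev (d.1⁻¹ * c.1).toWord = (c.1⁻¹ * d.1).toWord := by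
      rw [← toWord_inv, mul_inv_rev, inv_inv]
    simpa [invRev, ← hinvRev] using isReduced_invRev h
  rcases eq_or_ne (c.1⁻¹ * d.1).toWord [] with hnil | hnil
  · simp [Tight, hnil, FreeGroup.IsReduced]
  · simpa [Tight] using hleft.append_overlap hright hnil

lemma toWord_inv_mul_prod_of_isChain_tight (c : FreeGroup α × α) (s : List (FreeGroup α × α))
    (hlast : ∀ d ∈ c :: s, LastNe d.1 d.2) (hchain : (c :: s).IsChain Tight) :
    (∃ L, (c.1⁻¹ * ((c :: s).map conjOf).prod).toWord = (c.2, true) :: L) ∧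
      negCount c.1⁻¹ ≤ negCount (c.1⁻¹ * ((c :: s).map conjOf).prod) := by
  induction s generalizing c with
  | nil =>
    have hprod : c.1⁻¹ * ([c].map conjOf).prod = of c.2 * c.1⁻¹ := by simp [conjOf, ← mul_assoc]
    have hred : IsReduced ((of c.2).toWord ++ c.1⁻¹.toWord) :=
      (hlast c (by simp)).isReduced_cons true
    rw [hprod, negCount_mul_of_isReduced hred, toWord_mul_of_isReduced hred]
    exact ⟨⟨_, rfl⟩, Nat.le_add_left _ _⟩
  | cons d s ih =>
    obtain ⟨htight, hchain⟩ := List.isChain_cons_cons.1 hchain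
    obtain ⟨⟨L, hL⟩, hneg⟩ := ih d (fun e he ↦ hlast e (List.mem_cons_of_mem c he)) hchain
    set W := d.1⁻¹ * ((d :: s).map conjOf).prod with hW
    have hprod : c.1⁻¹ * ((c :: d :: s).map conjOf).prod = of c.2 * (c.1⁻¹ * d.1 * W) := by
      rw [hW, List.map_cons, List.prod_cons, conjOf]
      group
    have hred : IsReduced ((c.2, true) :: ((c.1⁻¹ * d.1).toWord ++ W.toWord)) := by
      have := FreeGroup.IsReduced.append_overlap (L₁ := (c.2, true) :: (c.1⁻¹ * d.1).toWord)
        (L₂ := [(d.2, true)]) (L₃ := L) htight (by simpa [← hL] using isReduced_toWord) (by simp)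
      simpa [hL] using this
    have hword : (c.1⁻¹ * d.1 * W).toWord = (c.1⁻¹ * d.1).toWord ++ W.toWord :=
      toWord_mul_of_isReduced hred.tail
    have hred' : IsReduced ((of c.2).toWord ++ (c.1⁻¹ * d.1 * W).toWord) := by rwa [hword]
    rw [hprod, toWord_mul_of_isReduced hred']
    refine ⟨⟨_, rfl⟩, ?_⟩
    calc negCount c.1⁻¹ = negCount (c.1⁻¹ * d.1 * d.1⁻¹) := by rw [mul_inv_cancel_right]
      _ ≤ negCount (c.1⁻¹ * d.1) + negCount d.1⁻¹ := negCount_mul_le _ _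
      _ ≤ negCount (c.1⁻¹ * d.1) + negCount W := by gcongr
      _ = negCount (c.1⁻¹ * d.1 * W) := (negCount_mul_of_isReduced hred.tail).symm
      _ ≤ negCount (of c.2 * (c.1⁻¹ * d.1 * W)) := by
        rw [negCount_mul_of_isReduced hred']
        exact Nat.le_add_left _ _

lemma toWord_prod_of_isChain_tight (c : FreeGroup α × α) (s : List (FreeGroup α × α))
    (hlast : ∀ d ∈ c :: s, LastNe d.1 d.2) (hchain : (c :: s).IsChain Tight) :
    (∃ L, ((c :: s).map conjOf).prod.toWord = c.1.toWord ++ (c.2, true) :: L) ∧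
      norm c.1 ≤ negCount ((c :: s).map conjOf).prod := by
  obtain ⟨⟨L, hL⟩, hneg⟩ := toWord_inv_mul_prod_of_isChain_tight c s hlast hchain
  set V := ((c :: s).map conjOf).prod
  have hred : IsReduced (c.1.toWord ++ (c.1⁻¹ * V).toWord) := by
    have := ((hlast c (by simp)).isReduced_append true).append_overlap (L₃ := L)
      (by simpa [← hL] using isReduced_toWord) (by simp)
    simpa [hL] using this
  have hword : V.toWord = c.1.toWord ++ (c.2, true) :: L := by
    rw [← hL, ← toWord_mul_of_isReduced hred, mul_inv_cancel_left]
  refine ⟨⟨L, hword⟩, ?_⟩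
  calc norm c.1 = negCount c.1 + negCount c.1⁻¹ := (negCount_add_negCount_inv _).symm
    _ ≤ negCount c.1 + negCount (c.1⁻¹ * V) := by gcongr
    _ = negCount V := by rw [← negCount_mul_of_isReduced hred, mul_inv_cancel_left]

lemma LastNe.toWord_conj_inv_mul_of (hp : LastNe p k) {w : List (α × Bool)}
    (hw : p.toWord = (j, true) :: w) :
    ((p * of k * p⁻¹)⁻¹ * of j).toWord = p.toWord ++ (k, false) :: invRev w := by
  refine toWord_mul_of_of_toWord_eq ?_
  rw [conj_of_inv, hp.toWord_conj, toWord_inv, hw]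
  simp [invRev]

lemma LastNe.negCount_conj_inv_mul_of (hp : LastNe p k) {w : List (α × Bool)}
    (hw : p.toWord = (j, true) :: w) : negCount ((p * of k * p⁻¹)⁻¹ * of j) = norm p := by
  have hinv : negCount p⁻¹ = (invRev w).countP (!·.2) + 1 := by
    simp [negCount, toWord_inv, hw, invRev]
  rw [← negCount_add_negCount_inv, hinv, negCount, hp.toWord_conj_inv_mul_of hw]
  simp [negCount]

lemma LastNe.exists_toWord_eq_cons (hp : LastNe p k)
    (hstart : p * of k * p⁻¹ ∈ startsWith (j, true)) (hne : p * of k * p⁻¹ ≠ of j) :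
    ∃ w, p.toWord = (j, true) :: w := by
  have hword : (p * of k * p⁻¹).toWord = _ := hp.toWord_conj true
  rw [startsWith, Set.mem_ofPred_eq, hword] at hstart
  rcases hw : p.toWord with _ | ⟨c, w⟩
  · rw [FreeGroup.toWord_eq_nil_iff] at hw
    simp_all
  · rw [hw] at hstart
    exact ⟨w, by simpa using hstart⟩

lemma conjOf_mem_startsWith_and_norm_lt {c₀ c : FreeGroup α × α} {s : List (FreeGroup α × α)}
    (hstart : conjOf c₀ ∈ startsWith (j, true)) (hne : conjOf c₀ ≠ of j)
    (hlast₀ : LastNe c₀.1 c₀.2) (hlast : ∀ d ∈ c :: s, LastNe d.1 d.2)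
    (hchain : (c :: s).IsChain Tight) {l : List α} (hl : j ∉ l)
    (hprod : conjOf c₀ * ((c :: s).map conjOf).prod = of j * (l.map of).prod) :
    conjOf c ∈ startsWith (j, true) ∧ norm (conjOf c) < norm (conjOf c₀) := by
  obtain ⟨w, hw⟩ := hlast₀.exists_toWord_eq_cons hstart hne
  obtain ⟨⟨L, hL⟩, hnorm⟩ := toWord_prod_of_isChain_tight c s hlast hchain
  have hG := hlast₀.toWord_conj_inv_mul_of hw
  have hGneg := hlast₀.negCount_conj_inv_mul_of hw
  have hV : ((c :: s).map conjOf).prod = (conjOf c₀)⁻¹ * of j * (l.map of).prod := by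
    rw [mul_assoc, ← hprod, inv_mul_cancel_left]
  have hc : (conjOf c).toWord = c.1.toWord ++ (c.2, true) :: c.1⁻¹.toWord :=
    (hlast c (by simp)).toWord_conj true
  constructor
  · have hVstart : ((c :: s).map conjOf).prod ∈ startsWith (j, true) := by
      rw [hV, mul_prod_of_mem_startsWith_iff hl, startsWith, Set.mem_ofPred_eq, conjOf, hG, hw]
      rfl
    rw [startsWith, Set.mem_ofPred_eq] at hVstart ⊢
    rw [hL] at hVstart
    rw [hc]
    cases h : c.1.toWord <;> simp_all
  · have hlt : norm c.1 < norm c₀.1 := by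
      rw [hV] at hnorm hL
      rcases toWord_mul_prod_of_eq_or_negCount_lt ((conjOf c₀)⁻¹ * of j) l with h | h
      · have hneg : negCount ((conjOf c₀)⁻¹ * of j * (l.map of).prod) = norm c₀.1 := by
          rw [← hGneg, negCount, h]
          simp [negCount, conjOf, Function.comp_def]
        -- If the lengths agreed, `x_{c.2}` and `x_{c₀.2}⁻¹` would be the same letter of one word.
        refine lt_of_le_of_ne (hneg ▸ hnorm) fun heq ↦ ?_
        rw [hL, conjOf, hG, List.append_assoc] at h
        simpa using (List.append_inj h heq).2
      · exact hnorm.trans_lt (hGneg ▸ h)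
    rw [conjOf, conjOf, (hlast c (by simp)).norm_conj, hlast₀.norm_conj]
    omega

end TightSequences

section ArtinAction

/-- Artin's automorphism of the free group on `x_0, x_1, …` given by
`x_i ↦ x_i x_{i+1} x_i⁻¹`, `x_{i+1} ↦ x_i`. -/
def artinAut (i : ℕ) : MulAut (FreeGroup ℕ) :=
  MonoidHom.toMulEquiv
    (FreeGroup.lift fun j ↦
      if j = i then of i * of (i + 1) * (of i)⁻¹ else if j = i + 1 then of i else of j)
    (FreeGroup.lift fun j ↦
      if j = i then of (i + 1)
      else if j = i + 1 then (of (i + 1))⁻¹ * of i * of (i + 1) else of j)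
    (by ext j; by_cases hi : j = i <;> by_cases hs : j = i + 1 <;> simp [hi, hs, mul_assoc])
    (by ext j; by_cases hi : j = i <;> by_cases hs : j = i + 1 <;> simp [hi, hs, mul_assoc])

lemma artinAut_of_self (i : ℕ) : artinAut i (of i) = of i * of (i + 1) * (of i)⁻¹ := by
  simp [artinAut]

lemma artinAut_of_succ (i : ℕ) : artinAut i (of (i + 1)) = of i := by
  simp [artinAut]

lemma artinAut_of_of_ne {i j : ℕ} (hi : j ≠ i) (hs : j ≠ i + 1) : artinAut i (of j) = of j := by
  simp [artinAut, hi, hs]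

lemma mulAut_freeGroup_ext {α : Type*} {f g : MulAut (FreeGroup α)}
    (h : ∀ j, f (of j) = g (of j)) : f = g :=
  MulEquiv.toMonoidHom_injective (FreeGroup.ext_hom _ _ h)

lemma artinAut_commute {i j : ℕ} (h : i + 1 < j) : Commute (artinAut i) (artinAut j) := by
  refine mulAut_freeGroup_ext fun k ↦ ?_
  have hji : artinAut j (of i) = of i := artinAut_of_of_ne (by omega) (by omega)
  have hji' : artinAut j (of (i + 1)) = of (i + 1) := artinAut_of_of_ne (by omega) (by omega)
  have hij : artinAut i (of j) = of j := artinAut_of_of_ne (by omega) (by omega)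
  have hij' : artinAut i (of (j + 1)) = of (j + 1) := artinAut_of_of_ne (by omega) (by omega)
  have hk : k = i ∨ k = i + 1 ∨ k = j ∨ k = j + 1 ∨
      k ≠ i ∧ k ≠ i + 1 ∧ k ≠ j ∧ k ≠ j + 1 := by omega
  rcases hk with rfl | rfl | rfl | rfl | ⟨_, _, _, _⟩ <;>
    simp [artinAut_of_self, artinAut_of_succ, artinAut_of_of_ne, *]

lemma artinAut_braid (i : ℕ) :
    artinAut i * artinAut (i + 1) * artinAut i =
      artinAut (i + 1) * artinAut i * artinAut (i + 1) := by
  refine mulAut_freeGroup_ext fun k ↦ ?_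
  have hlow : artinAut (i + 1) (of i) = of i := artinAut_of_of_ne (by omega) (by omega)
  have hhigh : artinAut i (of (i + 1 + 1)) = of (i + 1 + 1) :=
    artinAut_of_of_ne (by omega) (by omega)
  have hk : k = i ∨ k = i + 1 ∨ k = i + 1 + 1 ∨ k ≠ i ∧ k ≠ i + 1 ∧ k ≠ i + 1 + 1 := by omega
  rcases hk with rfl | rfl | rfl | ⟨_, _, _⟩ <;>
    simp only [MulAut.mul_apply, map_mul, map_inv, artinAut_of_self, artinAut_of_succ,
      artinAut_of_of_ne, ne_eq, not_false_eq_true, mul_assoc, mul_inv_rev, inv_inv,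
      inv_mul_cancel_left, *]

end ArtinAction

section BraidGroup

variable {m : ℕ} {i j : ℕ}

/-- The braid group with `m` generators, that is, on `m + 1` strands. -/
abbrev BraidGroup (m : ℕ) := PresentedGroup (braidRels m)

/-- The generator of the braid group with index `i`, counted from `0`; its value is `1` for
`m ≤ i`. -/
def sigma (i : ℕ) : BraidGroup m :=
  if h : i < m then PresentedGroup.of ⟨i, h⟩ else 1

lemma sigma_of_lt (h : i < m) : sigma i = (PresentedGroup.of ⟨i, h⟩ : BraidGroup m) :=
  dif_pos h

lemma sigma_of_le (h : m ≤ i) : (sigma i : BraidGroup m) = 1 :=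
  dif_neg h.not_gt

lemma sigma_commute (h : i + 1 < j) : Commute (sigma i : BraidGroup m) (sigma j) := by
  rcases lt_or_ge j m with hj | hj
  · rw [sigma_of_lt (by omega : i < m), sigma_of_lt hj]
    exact PresentedGroup.mk_eq_mk_of_mul_inv_mem
      (.inl ⟨⟨i, by omega⟩, ⟨j, hj⟩, h, by simp [mul_assoc]⟩)
  · rw [sigma_of_le hj]
    exact Commute.one_right _

lemma sigma_braid (h : i + 1 < m) :
    (sigma i * sigma (i + 1) * sigma i : BraidGroup m) =
      sigma (i + 1) * sigma i * sigma (i + 1) := by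
  rw [sigma_of_lt (by omega : i < m), sigma_of_lt h]
  exact PresentedGroup.mk_eq_mk_of_mul_inv_mem
    (.inr ⟨⟨i, by omega⟩, ⟨i + 1, h⟩, rfl, rfl⟩)

@[elab_as_elim]
lemma braidGroup_induction {P : BraidGroup m → Prop} (b : BraidGroup m) (one : P 1)
    (sigma_mul : ∀ i < m, ∀ b, P b → P (sigma i * b))
    (sigma_inv_mul : ∀ i < m, ∀ b, P b → P ((sigma i)⁻¹ * b)) : P b := by
  have hb : b ∈ Subgroup.closure (Set.range (PresentedGroup.of (rels := braidRels m))) :=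
    PresentedGroup.closure_range_of (braidRels m) ▸ Subgroup.mem_top b
  induction hb using Subgroup.closure_induction_left with
  | one => exact one
  | mul_left x hx y _ ih =>
    obtain ⟨i, rfl⟩ := hx
    exact sigma_of_lt i.isLt ▸ sigma_mul i i.isLt y ih
  | inv_mul_cancel x hx y _ ih =>
    obtain ⟨i, rfl⟩ := hx
    exact sigma_of_lt i.isLt ▸ sigma_inv_mul i i.isLt y ih

/-- The homomorphism out of the braid group determined by a sequence satisfying the braid
relations. -/
def braidLift {G : Type*} [Group G] (f : ℕ → G) (hcomm : ∀ {i j}, i + 1 < j → Commute (f i) (f j))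
    (hbraid : ∀ i, i + 1 < m → f i * f (i + 1) * f i = f (i + 1) * f i * f (i + 1)) :
    BraidGroup m →* G :=
  PresentedGroup.toGroup (f := fun i : Fin m ↦ f i) (by
    rintro r (⟨i, j, h, rfl⟩ | ⟨i, j, h, rfl⟩)
    · simp [(hcomm h).eq]
    · simp only [map_mul, map_inv, FreeGroup.lift_apply_of, mul_inv_eq_one, ← h]
      exact hbraid i (h ▸ j.isLt))

lemma braidLift_sigma {G : Type*} [Group G] {f : ℕ → G}
    {hcomm : ∀ {i j}, i + 1 < j → Commute (f i) (f j)}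
    {hbraid : ∀ i, i + 1 < m → f i * f (i + 1) * f i = f (i + 1) * f i * f (i + 1)}
    (h : i < m) : braidLift f hcomm hbraid (sigma i) = f i := by
  simp [braidLift, sigma_of_lt h]

/-- Artin's action of the braid group on the free group. -/
instance : MulDistribMulAction (BraidGroup m) (FreeGroup ℕ) :=
  MulDistribMulAction.compHom _ (braidLift (m := m) artinAut artinAut_commute
    fun i _ ↦ artinAut_braid i)

lemma sigma_smul (h : i < m) (g : FreeGroup ℕ) : (sigma i : BraidGroup m) • g = artinAut i g :=
  congrArg (fun f : MulAut (FreeGroup ℕ) ↦ f g) (braidLift_sigma h)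

lemma sigma_smul_of_self (h : i < m) :
    (sigma i : BraidGroup m) • of i = of i * of (i + 1) * (of i)⁻¹ := by
  rw [sigma_smul h, artinAut_of_self]

lemma sigma_smul_of_succ (h : i < m) : (sigma i : BraidGroup m) • of (i + 1) = of i := by
  rw [sigma_smul h, artinAut_of_succ]

lemma sigma_smul_of_of_ne (hi : j ≠ i) (hs : j ≠ i + 1) :
    (sigma i : BraidGroup m) • of j = of j := by
  rcases lt_or_ge i m with h | h
  · rw [sigma_smul h, artinAut_of_of_ne hi hs]
  · rw [sigma_of_le h, one_smul]

lemma sigma_inv_smul_of_self (h : i < m) : (sigma i : BraidGroup m)⁻¹ • of i = of (i + 1) := by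
  rw [inv_smul_eq_iff, sigma_smul_of_succ h]

lemma sigma_inv_smul_of_succ (h : i < m) :
    (sigma i : BraidGroup m)⁻¹ • of (i + 1) = (of (i + 1))⁻¹ * of i * of (i + 1) := by
  rw [inv_smul_eq_iff, smul_mul', smul_mul', smul_inv', sigma_smul_of_succ h, sigma_smul_of_self h]
  group

lemma sigma_inv_smul_of_of_ne (hi : j ≠ i) (hs : j ≠ i + 1) :
    (sigma i : BraidGroup m)⁻¹ • of j = of j := by
  rw [inv_smul_eq_iff, sigma_smul_of_of_ne hi hs]

end BraidGroup

section BraidRelation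

variable {G : Type*} [Group G] {a b : G}

lemma conj_inv_of_braid (h : a * b * a = b * a * b) : a * b⁻¹ * a⁻¹ = b⁻¹ * a⁻¹ * b := by
  rw [mul_inv_eq_iff_eq_mul, mul_inv_eq_iff_eq_mul]
  calc a = b⁻¹ * a⁻¹ * (a * b * a) := by group
    _ = b⁻¹ * a⁻¹ * b * a * b := by rw [h]; group

lemma inv_conj_of_braid (h : a * b * a = b * a * b) : b⁻¹ * a * b = a * b * a⁻¹ := by
  rw [eq_mul_inv_iff_mul_eq, mul_assoc, mul_assoc, ← mul_assoc a b a, h]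
  group

lemma conj_of_braid (h : a * b * a = b * a * b) : b * a * b⁻¹ = a⁻¹ * b * a := by
  calc b * a * b⁻¹ = a⁻¹ * (a * b * a) * b⁻¹ := by group
    _ = a⁻¹ * b * a := by rw [h]; group

end BraidRelation

section Combing

variable {m : ℕ} {i k : ℕ}

/-- The subgroup of braids leaving the first strand alone, generated by the `sigma i` with
`i ≠ 0`. -/
def tailSubgroup (m : ℕ) : Subgroup (BraidGroup m) :=
  Subgroup.closure {b | ∃ i, 1 ≤ i ∧ b = sigma i}

lemma sigma_mem_tailSubgroup (h : 1 ≤ i) : sigma i ∈ tailSubgroup m :=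
  Subgroup.subset_closure ⟨i, h, rfl⟩

/-- The braid `(sigma (k - 1))⁻¹ ⋯ (sigma 0)⁻¹`, which maps `x_0` to `x_k`. -/
def transfer : ℕ → BraidGroup m
  | 0 => 1
  | k + 1 => (sigma k)⁻¹ * transfer k

lemma transfer_smul_of_zero (hk : k ≤ m) : (transfer k : BraidGroup m) • of 0 = of k := by
  induction k with
  | zero => exact one_smul _ _
  | succ k ih => rw [transfer, mul_smul, ih (by omega), sigma_inv_smul_of_self (by omega)]

lemma transfer_smul_of_lt {j : ℕ} (h : k < j) : (transfer k : BraidGroup m) • of j = of j := by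
  induction k with
  | zero => exact one_smul _ _
  | succ k ih =>
    rw [transfer, mul_smul, ih (by omega), sigma_inv_smul_of_of_ne (by omega) (by omega)]

lemma sigma_commute_transfer (h : k < i) : Commute (sigma i : BraidGroup m) (transfer k) := by
  induction k with
  | zero => exact Commute.one_right _
  | succ k ih => exact (sigma_commute h).symm.inv_right.mul_right (ih (by omega))

lemma sigma_mul_transfer (h : i + 1 < k) (hk : k ≤ m) :
    (sigma i * transfer k : BraidGroup m) = transfer k * sigma (i + 1) := by
  induction k, h using Nat.le_induction with
  | base =>
    have hbraid := conj_inv_of_braid (sigma_braid (m := m) (i := i) hk)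
    have hcomm := (sigma_commute_transfer (m := m) (Nat.lt_add_one i)).eq
    calc sigma i * transfer (i + 2)
        = (sigma i * (sigma (i + 1))⁻¹ * (sigma i)⁻¹) * transfer i := by simp only [transfer]; group
      _ = (sigma (i + 1))⁻¹ * (sigma i)⁻¹ * (sigma (i + 1) * transfer i) := by rw [hbraid]; group
      _ = transfer (i + 2) * sigma (i + 1) := by rw [hcomm]; simp only [transfer]; group
  | succ k hik ih =>
    have hcomm : Commute (sigma i : BraidGroup m) (sigma k) := sigma_commute hik
    rw [transfer, ← mul_assoc, hcomm.inv_right.eq, mul_assoc, ih (by omega), mul_assoc]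

/-- The pure braid winding the first strand once around strand `k + 1`, where strands are counted
from `0`. -/
def winding (k : ℕ) : BraidGroup m :=
  (transfer k)⁻¹ * (sigma k * sigma k) * transfer k

lemma winding_of_le (h : m ≤ k) : (winding k : BraidGroup m) = 1 := by
  simp [winding, sigma_of_le h]

lemma winding_smul_of_zero (h : k < m) :
    (winding k : BraidGroup m) • of 0 = (of 0 * of (k + 1)) * of 0 * (of 0 * of (k + 1))⁻¹ := by
  have h₀ : (transfer k : BraidGroup m)⁻¹ • of k = of 0 := by
    rw [inv_smul_eq_iff, transfer_smul_of_zero h.le]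
  have h₁ : (transfer k : BraidGroup m)⁻¹ • of (k + 1) = of (k + 1) := by
    rw [inv_smul_eq_iff, transfer_smul_of_lt (Nat.lt_add_one k)]
  simp only [winding, mul_smul, transfer_smul_of_zero h.le, sigma_smul_of_self h,
    sigma_smul_of_succ h, smul_mul', smul_inv', h₀, h₁]
  group

lemma sigma_commute_winding_of_lt (h : k + 1 < i) :
    Commute (sigma i : BraidGroup m) (winding k) := by
  have ht : Commute (sigma i : BraidGroup m) (transfer k) := sigma_commute_transfer (by omega)
  have hs : Commute (sigma i : BraidGroup m) (sigma k) := (sigma_commute h).symm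
  exact (ht.inv_right.mul_right (hs.mul_right hs)).mul_right ht

lemma sigma_succ_commute_winding (h : i + 1 < k) :
    Commute (sigma (i + 1) : BraidGroup m) (winding k) := by
  rcases lt_or_ge k m with hk | hk
  · have ht : sigma (i + 1) = (transfer k : BraidGroup m)⁻¹ * sigma i * transfer k := by
      rw [mul_assoc, sigma_mul_transfer h hk.le, inv_mul_cancel_left]
    have hs : Commute (sigma i : BraidGroup m) (sigma k) := sigma_commute h
    simpa [ht, winding] using (hs.mul_right hs).conj (transfer k)⁻¹
  · rw [winding_of_le hk]
    exact Commute.one_right _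

lemma winding_succ (h : k + 1 < m) :
    (winding (k + 1) : BraidGroup m) = (sigma (k + 1))⁻¹ * winding k * sigma (k + 1) := by
  have hbraid := inv_conj_of_braid (sigma_braid h)
  have hcomm := sigma_commute_transfer (m := m) (Nat.lt_add_one k)
  calc winding (k + 1)
      = (transfer k)⁻¹ * (sigma k * sigma (k + 1) * (sigma k)⁻¹) *
          (sigma k * sigma (k + 1) * (sigma k)⁻¹) * transfer k := by
        simp only [winding, transfer]; group
    _ = ((transfer k)⁻¹ * (sigma (k + 1))⁻¹) * (sigma k * sigma k) *
          (sigma (k + 1) * transfer k) := by rw [← hbraid]; group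
    _ = (sigma (k + 1))⁻¹ * winding k * sigma (k + 1) := by
        rw [hcomm.eq, hcomm.inv_inv.eq.symm, winding]; group

lemma sigma_conj_winding (h : k + 1 < m) :
    sigma (k + 1) * winding k * (sigma (k + 1) : BraidGroup m)⁻¹ =
      (winding k)⁻¹ * winding (k + 1) * winding k := by
  have hbraid := conj_of_braid (sigma_braid h)
  have hcomm := sigma_commute_transfer (m := m) (Nat.lt_add_one k)
  calc sigma (k + 1) * winding k * (sigma (k + 1) : BraidGroup m)⁻¹
      = (sigma (k + 1) * (transfer k)⁻¹) * (sigma k * sigma k) *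
          (transfer k * (sigma (k + 1))⁻¹) := by rw [winding]; group
    _ = (transfer k)⁻¹ * (sigma (k + 1) * sigma k * (sigma (k + 1))⁻¹) *
          (sigma (k + 1) * sigma k * (sigma (k + 1))⁻¹) * transfer k := by
        rw [hcomm.inv_right.eq, ← hcomm.inv_left.eq]; group
    _ = (winding k)⁻¹ * ((transfer k)⁻¹ * (sigma k * sigma (k + 1) * (sigma k)⁻¹) *
          (sigma k * sigma (k + 1) * (sigma k)⁻¹) * transfer k) * winding k := by
        rw [hbraid, winding]; group
    _ = (winding k)⁻¹ * winding (k + 1) * winding k := by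
        simp only [winding, transfer]; group

/-- The homomorphism sending `x_0` to `1` and `x_{k+1}` to the inverse of `winding k`. If
`b • x_0 = U x_0 U⁻¹`, then multiplying `b` by `unwinding U` makes it fix `x_0`. -/
def unwinding : FreeGroup ℕ →* BraidGroup m :=
  FreeGroup.lift fun
    | 0 => 1
    | k + 1 => (winding k)⁻¹

lemma unwinding_of_zero : (unwinding (of 0) : BraidGroup m) = 1 := by
  simp [unwinding]

lemma unwinding_of_succ (k : ℕ) : (unwinding (of (k + 1)) : BraidGroup m) = (winding k)⁻¹ := by
  simp [unwinding]

lemma unwinding_sigma_smul (hi : 1 ≤ i) (U : FreeGroup ℕ) :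
    (unwinding ((sigma i : BraidGroup m) • U) : BraidGroup m) =
      sigma i * unwinding U * (sigma i)⁻¹ := by
  rcases le_or_gt m i with him | him
  · simp [sigma_of_le him]
  obtain ⟨i, rfl⟩ := Nat.exists_eq_add_of_le' hi
  suffices h : unwinding.comp (MulDistribMulAction.toMonoidHom _ (sigma (i + 1) : BraidGroup m)) =
      (MulAut.conj (sigma (i + 1))).toMonoidHom.comp unwinding from DFunLike.congr_fun h U
  ext j
  simp only [MonoidHom.comp_apply, MulDistribMulAction.toMonoidHom_apply,
    MulEquiv.coe_toMonoidHom, MulAut.conj_apply]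
  rcases j with _ | j
  · rw [sigma_smul_of_of_ne (by omega) (by omega), unwinding_of_zero]
    simp
  have hj : j = i ∨ j = i + 1 ∨ j + 1 < i + 1 ∨ i + 1 < j := by omega
  rcases hj with rfl | rfl | hj | hj
  · rw [sigma_smul_of_self him, map_mul, map_mul, map_inv, unwinding_of_succ, unwinding_of_succ,
      ← conj_inv (b := sigma (j + 1)), sigma_conj_winding him]
    group
  · rw [sigma_smul_of_succ him, unwinding_of_succ, unwinding_of_succ, winding_succ him]
    group
  · rw [sigma_smul_of_of_ne (by omega) (by omega), unwinding_of_succ,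
      (sigma_commute_winding_of_lt hj).inv_right.eq, mul_inv_cancel_right]
  · rw [sigma_smul_of_of_ne (by omega) (by omega), unwinding_of_succ,
      (sigma_succ_commute_winding hj).inv_right.eq, mul_inv_cancel_right]

lemma unwinding_winding_zero_smul (U : FreeGroup ℕ) :
    unwinding ((winding 0 : BraidGroup m) • U) = (unwinding U : BraidGroup m) := by
  rcases Nat.eq_zero_or_pos m with rfl | hm
  · rw [winding_of_le le_rfl, one_smul]
  suffices h : unwinding.comp (MulDistribMulAction.toMonoidHom _ (winding 0 : BraidGroup m)) =
      unwinding from DFunLike.congr_fun h U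
  ext j
  simp only [MonoidHom.comp_apply, MulDistribMulAction.toMonoidHom_apply]
  rcases j with _ | _ | j
  · rw [winding_smul_of_zero hm]
    simp [unwinding_of_zero]
  · simp [winding, transfer, mul_smul, sigma_smul_of_succ hm, sigma_smul_of_self hm,
      unwinding_of_zero]
  · simp [winding, transfer, mul_smul, sigma_smul_of_of_ne]

lemma unwinding_winding_smul (k : ℕ) (U : FreeGroup ℕ) :
    unwinding ((winding k : BraidGroup m) • U) = (unwinding U : BraidGroup m) := by
  induction k generalizing U with
  | zero => exact unwinding_winding_zero_smul U
  | succ k ih =>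
    rcases le_or_gt m (k + 1) with hk | hk
    · rw [winding_of_le hk, one_smul]
    have hconj : sigma (k + 1) * unwinding ((winding (k + 1) : BraidGroup m) • U) *
        (sigma (k + 1) : BraidGroup m)⁻¹ = sigma (k + 1) * unwinding U * (sigma (k + 1))⁻¹ := by
      rw [← unwinding_sigma_smul (by omega), ← unwinding_sigma_smul (by omega), ← mul_smul,
        winding_succ hk, mul_assoc, mul_inv_cancel_left, mul_smul, ih]
    exact mul_left_cancel (mul_right_cancel hconj)

/-- The braids `b` with `b • x_0` conjugate to `x_0` that lie in `tailSubgroup m` once unwound. -/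
def combable (m : ℕ) : Set (BraidGroup m) :=
  {b | ∃ U, b • of 0 = U * of 0 * U⁻¹ ∧ unwinding U * b ∈ tailSubgroup m}

open MulAction Pointwise

lemma mem_stabilizer_combable {g : BraidGroup m} {c : FreeGroup ℕ}
    (hg : g • of 0 = c * of 0 * c⁻¹)
    (h : ∀ U b, unwinding (g • U * c) * (g * b) ∈ tailSubgroup m ↔
      unwinding U * b ∈ tailSubgroup m) :
    g ∈ stabilizer (BraidGroup m) (combable m) := by
  have hgU (U b) : (g * b) • of 0 = (g • U * c) * of 0 * (g • U * c)⁻¹ ↔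
      b • of 0 = U * of 0 * U⁻¹ := by
    rw [← smul_left_cancel_iff g (x := b • of 0), mul_smul]
    simp [smul_mul', hg, mul_assoc]
  refine mem_stabilizer_set.2 fun b ↦ ⟨fun ⟨V, hV, hmem⟩ ↦ ?_, fun ⟨U, hU, hmem⟩ ↦ ?_⟩
  · have hV' : V = g • (g⁻¹ • (V * c⁻¹)) * c := by simp
    rw [hV'] at hV hmem
    exact ⟨_, (hgU _ _).1 hV, (h _ _).1 hmem⟩
  · exact ⟨_, (hgU U b).2 hU, (h U b).2 hmem⟩

lemma sigma_mem_stabilizer_combable (hi : 1 ≤ i) :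
    sigma i ∈ stabilizer (BraidGroup m) (combable m) := by
  refine mem_stabilizer_combable (c := 1) ?_ fun U b ↦ ?_
  · rw [sigma_smul_of_of_ne (by omega) (by omega)]
    simp
  rw [mul_one, unwinding_sigma_smul hi, mul_assoc, inv_mul_cancel_left, mul_assoc]
  exact Subgroup.mul_mem_cancel_left _ (sigma_mem_tailSubgroup hi)

lemma winding_mem_stabilizer_combable (hk : k < m) :
    winding k ∈ stabilizer (BraidGroup m) (combable m) := by
  refine mem_stabilizer_combable (winding_smul_of_zero hk) fun U b ↦ ?_
  simp [unwinding_winding_smul, unwinding_of_zero, unwinding_of_succ, mul_assoc]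

lemma transfer_swap_inv_mul_sigma_mul_transfer_mem (hi : i < m) (hk : k ≤ m) :
    (transfer (Equiv.swap i (i + 1) k))⁻¹ * sigma i * transfer k ∈
      stabilizer (BraidGroup m) (combable m) := by
  have hki : k < i ∨ k = i ∨ k = i + 1 ∨ i + 1 < k := by omega
  rcases hki with hki | rfl | rfl | hki
  · rw [Equiv.swap_apply_of_ne_of_ne (by omega) (by omega), mul_assoc,
      (sigma_commute_transfer hki).eq, inv_mul_cancel_left]
    exact sigma_mem_stabilizer_combable (by omega)
  · rw [Equiv.swap_apply_left, transfer, mul_inv_rev, inv_inv, mul_assoc _ (sigma k) (sigma k)]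
    exact winding_mem_stabilizer_combable hi
  · rw [Equiv.swap_apply_right, transfer, mul_assoc, mul_inv_cancel_left, inv_mul_cancel]
    exact one_mem _
  · rw [Equiv.swap_apply_of_ne_of_ne (by omega) (by omega), mul_assoc, sigma_mul_transfer hki hk,
      inv_mul_cancel_left]
    exact sigma_mem_stabilizer_combable (by omega)

lemma exists_eq_transfer_mul (b : BraidGroup m) :
    ∃ k ≤ m, ∃ g ∈ stabilizer (BraidGroup m) (combable m), b = transfer k * g := by
  have hswap {i k : ℕ} (hi : i < m) (hk : k ≤ m) : Equiv.swap i (i + 1) k ≤ m := by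
    rw [Equiv.swap_apply_def]
    split_ifs <;> omega
  induction b using braidGroup_induction with
  | one => exact ⟨0, Nat.zero_le m, 1, one_mem _, (mul_one _).symm⟩
  | sigma_mul i hi b ih =>
    obtain ⟨k, hk, g, hg, rfl⟩ := ih
    refine ⟨_, hswap hi hk, _,
      mul_mem (transfer_swap_inv_mul_sigma_mul_transfer_mem hi hk) hg, ?_⟩
    group
  | sigma_inv_mul i hi b ih =>
    obtain ⟨k, hk, g, hg, rfl⟩ := ih
    have hmem := transfer_swap_inv_mul_sigma_mul_transfer_mem hi (hswap hi hk)
    rw [Equiv.swap_apply_self] at hmem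
    refine ⟨_, hswap hi hk, _, mul_mem (inv_mem hmem) hg, ?_⟩
    group

lemma one_mem_combable : 1 ∈ combable m :=
  ⟨1, by simp, by simp⟩

theorem mem_tailSubgroup_of_smul_of_zero {b : BraidGroup m} (hb : b • of 0 = of 0) :
    b ∈ tailSubgroup m := by
  obtain ⟨k, hk, g, hg, rfl⟩ := exists_eq_transfer_mul b
  obtain ⟨U, hU, hmem⟩ : g ∈ combable m := by
    simpa using (MulAction.mem_stabilizer_set.1 hg 1).2 one_mem_combable
  rw [mul_smul, hU] at hb
  have hconj : ((transfer k : BraidGroup m) • U) * of k *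
      ((transfer k : BraidGroup m) • U)⁻¹ = of 0 := by
    rw [← hb, smul_mul', smul_mul', smul_inv', transfer_smul_of_zero hk]
  obtain rfl : k = 0 := eq_of_isConj_of (isConj_iff.2 ⟨_, hconj⟩)
  obtain ⟨e, rfl⟩ : ∃ e : ℤ, U = of 0 ^ e := eq_zpow_of_conj_of_eq (by simpa [transfer] using hb)
  simpa [transfer, unwinding_of_zero] using hmem

end Combing

section PrefixProducts

variable {m i k : ℕ}

/-- The product `x_0 x_1 ⋯ x_{k-1}`. -/
def prefixProd (k : ℕ) : FreeGroup ℕ :=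
  ((List.range k).map of).prod

lemma prefixProd_zero : prefixProd 0 = 1 := rfl

lemma prefixProd_succ (k : ℕ) : prefixProd (k + 1) = prefixProd k * of k := by
  simp [prefixProd, List.range_succ]

lemma prefixProd_succ_eq_of_zero_mul (k : ℕ) :
    prefixProd (k + 1) = of 0 * ((List.range' 1 k).map of).prod := by
  simp [prefixProd, List.range_eq_range', List.range'_succ]

lemma sigma_smul_prefixProd (h : k ≠ i + 1) :
    (sigma i : BraidGroup m) • prefixProd k = prefixProd k := by
  rcases le_or_gt m i with him | him
  · rw [sigma_of_le him, one_smul]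
  induction k using Nat.strongRec with
  | ind k ih =>
    rcases k with _ | k
    · rw [prefixProd_zero, smul_one]
    rcases eq_or_ne k (i + 1) with rfl | hk
    · rw [prefixProd_succ, prefixProd_succ, smul_mul', smul_mul', ih i (by omega) (by omega),
        sigma_smul_of_self him, sigma_smul_of_succ him]
      group
    · rw [prefixProd_succ, smul_mul', ih k (by omega) hk, sigma_smul_of_of_ne (by omega) hk]

lemma smul_prefixProd (b : BraidGroup m) : b • prefixProd (m + 1) = prefixProd (m + 1) := by
  induction b using braidGroup_induction with
  | one => exact one_smul _ _
  | sigma_mul i hi b ih => rw [mul_smul, ih, sigma_smul_prefixProd (by omega)]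
  | sigma_inv_mul i hi b ih =>
    rw [mul_smul, ih, inv_smul_eq_iff, sigma_smul_prefixProd (by omega)]

end PrefixProducts

section GeneratorImages

variable {m i : ℕ}

lemma isConj_smul {g h : FreeGroup ℕ} (hgh : IsConj g h) (b : BraidGroup m) :
    IsConj (b • g) (b • h) :=
  (MulDistribMulAction.toMonoidHom _ b).map_isConj hgh

lemma isConj_of_swap_sigma_smul_of (hi : i < m) (k : ℕ) :
    IsConj (of (Equiv.swap i (i + 1) k)) ((sigma i : BraidGroup m) • of k) := by
  rcases eq_or_ne k i with rfl | hki
  · rw [Equiv.swap_apply_left, sigma_smul_of_self hi]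
    exact isConj_iff.2 ⟨of k, rfl⟩
  rcases eq_or_ne k (i + 1) with rfl | hks
  · rw [Equiv.swap_apply_right, sigma_smul_of_succ hi]
  · rw [Equiv.swap_apply_of_ne_of_ne hki hks, sigma_smul_of_of_ne hki hks]

lemma exists_isConj_of_smul_of (b : BraidGroup m) (i : ℕ) : ∃ k, IsConj (of k) (b • of i) := by
  induction b using braidGroup_induction with
  | one => exact ⟨i, by rw [one_smul]⟩
  | sigma_mul j hj b ih =>
    obtain ⟨k, hk⟩ := ih
    exact ⟨_, mul_smul (sigma j) b (of i) ▸
      (isConj_of_swap_sigma_smul_of hj k).trans (isConj_smul hk (sigma j))⟩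
  | sigma_inv_mul j hj b ih =>
    obtain ⟨k, hk⟩ := ih
    have hswap := isConj_smul (m := m)
      (isConj_of_swap_sigma_smul_of hj (Equiv.swap j (j + 1) k)) (sigma j)⁻¹
    rw [Equiv.swap_apply_self, inv_smul_smul] at hswap
    exact ⟨_, mul_smul (sigma j)⁻¹ b (of i) ▸ hswap.symm.trans (isConj_smul hk (sigma j)⁻¹)⟩

lemma exists_lastNe_conjOf_eq_smul_of (b : BraidGroup m) (i : ℕ) :
    ∃ c : FreeGroup ℕ × ℕ, LastNe c.1 c.2 ∧ conjOf c = b • of i := by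
  obtain ⟨k, hk⟩ := exists_isConj_of_smul_of b i
  obtain ⟨p, hp⟩ := isConj_iff.1 hk
  obtain ⟨q, hq, hlast⟩ := exists_lastNe_conj_eq p k
  exact ⟨(q, k), hlast, hq.symm.trans hp⟩

end GeneratorImages

section Relaxation

variable {m i : ℕ} {g h : BraidGroup m}

lemma tailSubgroup_smul_of_zero (hh : h ∈ tailSubgroup m) : h • of 0 = of 0 := by
  suffices hle : tailSubgroup m ≤ MulAction.stabilizer (BraidGroup m) (of 0 : FreeGroup ℕ) from
    hle hh
  refine (Subgroup.closure_le _).2 ?_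
  rintro _ ⟨i, hi, rfl⟩
  exact sigma_smul_of_of_ne (by omega) (by omega)

/-- The total length of the images of `x_0, …, x_m`, which is to be minimised. -/
def totalNorm (g : BraidGroup m) : ℕ :=
  ∑ j ∈ Finset.range (m + 1), norm (g • of j)

/-- The braid has the least total length in its left coset of `tailSubgroup m`. -/
def IsRelaxed (g : BraidGroup m) : Prop :=
  ∀ h ∈ tailSubgroup m, totalNorm g ≤ totalNorm (g * h)

lemma exists_isRelaxed_mul (b : BraidGroup m) : ∃ h ∈ tailSubgroup m, IsRelaxed (b * h) := by
  obtain ⟨h, hmem, hmin⟩ := exists_minimalFor_of_wellFoundedLT (· ∈ tailSubgroup m)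
    (fun h ↦ totalNorm (b * h)) ⟨1, one_mem _⟩
  refine ⟨h, hmem, fun k hk ↦ le_of_not_gt fun hlt ↦ ?_⟩
  rw [mul_assoc] at hlt
  exact hlt.not_ge (hmin (mul_mem hmem hk) hlt.le)

lemma add_le_add_of_sum_le_sum {ι M : Type*} [AddCommMonoid M] [PartialOrder M]
    [IsOrderedCancelAddMonoid M] {s : Finset ι} {f f' : ι → M} {a b : ι} (hab : a ≠ b)
    (ha : a ∈ s) (hb : b ∈ s) (heq : ∀ j, j ≠ a → j ≠ b → f j = f' j)
    (hle : ∑ j ∈ s, f j ≤ ∑ j ∈ s, f' j) : f a + f b ≤ f' a + f' b := by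
  classical
  have hpair : {a, b} ⊆ s := Finset.insert_subset ha (Finset.singleton_subset_iff.2 hb)
  have hrest : ∑ j ∈ s \ {a, b}, f j = ∑ j ∈ s \ {a, b}, f' j :=
    Finset.sum_congr rfl fun j hj ↦ heq j (fun h ↦ by simp [h] at hj) (fun h ↦ by simp [h] at hj)
  rw [← Finset.sum_sdiff hpair, ← Finset.sum_sdiff hpair, Finset.sum_pair hab,
    Finset.sum_pair hab, hrest] at hle
  exact le_of_add_le_add_left hle

lemma IsRelaxed.norm_add_norm_le (hg : IsRelaxed g) (hi : i < m) (hh : h ∈ tailSubgroup m)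
    (hfix : ∀ j, j ≠ i → j ≠ i + 1 → h • of j = of j) :
    norm (g • of i) + norm (g • of (i + 1)) ≤
      norm (g • h • of i) + norm (g • h • of (i + 1)) := by
  simp only [← mul_smul]
  refine add_le_add_of_sum_le_sum (f := fun j ↦ norm (g • of j))
    (f' := fun j ↦ norm ((g * h) • of j)) (by omega) (Finset.mem_range.2 (by omega))
    (Finset.mem_range.2 (by omega)) (fun j hji hjs ↦ ?_) (hg h hh)
  rw [mul_smul, hfix j hji hjs]

lemma IsRelaxed.tight (hg : IsRelaxed g) (h1 : 1 ≤ i) (hi : i < m) {c d : FreeGroup ℕ × ℕ}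
    (hlastc : LastNe c.1 c.2) (hlastd : LastNe d.1 d.2) (hc : conjOf c = g • of i)
    (hd : conjOf d = g • of (i + 1)) : Tight c d := by
  refine tight_of_norm_le hlastc hlastd ?_ ?_
  · have hle := hg.norm_add_norm_le hi (sigma_mem_tailSubgroup h1)
      fun j ↦ sigma_smul_of_of_ne
    rw [sigma_smul_of_self hi, sigma_smul_of_succ hi, smul_mul', smul_mul', smul_inv', ← hc,
      ← hd] at hle
    omega
  · have hle := hg.norm_add_norm_le hi (inv_mem (sigma_mem_tailSubgroup h1))
      fun j ↦ sigma_inv_smul_of_of_ne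
    rw [sigma_inv_smul_of_self hi, sigma_inv_smul_of_succ hi, smul_mul', smul_mul', smul_inv',
      ← hc, ← hd] at hle
    omega

lemma IsRelaxed.smul_of_one_mem_startsWith_and_norm_lt (hg : IsRelaxed g) (hm : 0 < m)
    (hstart : g • of 0 ∈ startsWith (0, true)) (hne : g • of 0 ≠ of 0) :
    g • of 1 ∈ startsWith (0, true) ∧ norm (g • of 1) < norm (g • of 0) := by
  choose c hlast hc using exists_lastNe_conjOf_eq_smul_of g
  have hcons : (List.range' 1 m).map c = c 1 :: (List.range' 2 (m - 1)).map c := by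
    obtain ⟨m, rfl⟩ := Nat.exists_eq_add_of_lt hm
    simp [List.range'_succ]
  have hchain : ((List.range' 1 m).map c).IsChain Tight := by
    refine List.isChain_iff_getElem.2 fun j hj ↦ ?_
    simp only [List.length_map, List.length_range'] at hj
    simp only [List.getElem_map, List.getElem_range', one_mul, ← add_assoc]
    exact hg.tight (by omega) (by omega) (hlast _) (hlast _) (hc _) (hc _)
  have hprod : conjOf (c 0) * (((List.range' 1 m).map c).map conjOf).prod =
      of 0 * ((List.range' 1 m).map of).prod := by
    rw [← prefixProd_succ_eq_of_zero_mul, ← smul_prefixProd g, prefixProd_succ_eq_of_zero_mul,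
      smul_mul', hc, List.map_map, List.smul_prod', List.map_map]
    simp [Function.comp_def, hc]
  rw [hcons] at hchain hprod
  simp only [← hc] at hstart hne ⊢
  refine conjOf_mem_startsWith_and_norm_lt hstart hne (hlast 0) ?_ hchain (by simp) hprod
  rw [← hcons]
  exact List.forall_mem_map.2 fun i _ ↦ hlast i

end Relaxation

section SigmaNonnegative

variable {m : ℕ} {b : BraidGroup m}

/-- The braids represented by a word without the letter `σ_1⁻¹`. The generator `σ_1` has index
`0`. -/
def sigmaNonneg (m : ℕ) : Submonoid (BraidGroup m) where
  carrier := {b | ∃ w : List (Fin m × Bool),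
    (∀ p ∈ w, (p.1 : ℕ) = 0 → p.2 = true) ∧ PresentedGroup.mk (braidRels m) (mk w) = b}
  one_mem' := ⟨[], by simp, map_one _⟩
  mul_mem' := by
    rintro _ _ ⟨v, hv, rfl⟩ ⟨w, hw, rfl⟩
    exact ⟨v ++ w, by grind, by rw [← FreeGroup.mul_mk, map_mul]⟩

lemma sigma_mem_sigmaNonneg (i : ℕ) : sigma i ∈ sigmaNonneg m := by
  rcases lt_or_ge i m with hi | hi
  · exact ⟨[(⟨i, hi⟩, true)], by simp, (sigma_of_lt hi).symm⟩
  · exact sigma_of_le hi ▸ one_mem _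

lemma sigma_inv_mem_sigmaNonneg {i : ℕ} (h : 1 ≤ i) : (sigma i)⁻¹ ∈ sigmaNonneg m := by
  rcases lt_or_ge i m with hi | hi
  · exact ⟨[(⟨i, hi⟩, false)], by simp; omega, by rw [sigma_of_lt hi]; rfl⟩
  · rw [sigma_of_le hi, inv_one]
    exact one_mem _

lemma tailSubgroup_le_sigmaNonneg : (tailSubgroup m).toSubmonoid ≤ sigmaNonneg m := by
  rw [tailSubgroup, Subgroup.closure_toSubmonoid, Submonoid.closure_le]
  rintro b (⟨i, _, rfl⟩ | ⟨i, hi, hb⟩)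
  · exact sigma_mem_sigmaNonneg i
  · rw [inv_eq_iff_eq_inv.1 hb]
    exact sigma_inv_mem_sigmaNonneg hi

theorem mem_sigmaNonneg_of_smul_of_zero_mem_startsWith (hm : 0 < m)
    (hb : b • of 0 ∈ startsWith (0, true)) : b ∈ sigmaNonneg m := by
  induction hn : norm (b • of 0) using Nat.strongRec generalizing b with
  | ind n ih =>
    by_cases hfix : b • of 0 = of 0
    · exact tailSubgroup_le_sigmaNonneg (mem_tailSubgroup_of_smul_of_zero hfix)
    obtain ⟨h, hh, hrelaxed⟩ := exists_isRelaxed_mul b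
    have hbh : (b * h) • of 0 = b • of 0 := by rw [mul_smul, tailSubgroup_smul_of_zero hh]
    obtain ⟨hstart, hlt⟩ := hrelaxed.smul_of_one_mem_startsWith_and_norm_lt hm
      (by rwa [hbh]) (by rwa [hbh])
    have hsmul : (b * h * (sigma 0)⁻¹) • of 0 = (b * h) • of 1 := by
      rw [mul_smul (b * h), sigma_inv_smul_of_self hm]
    have hmem : b * h * (sigma 0)⁻¹ ∈ sigmaNonneg m :=
      ih _ (by rwa [← hn, ← hbh]) (hsmul ▸ hstart) (by rw [hsmul])
    have hb' : b = b * h * (sigma 0)⁻¹ * sigma 0 * h⁻¹ := by group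
    rw [hb']
    exact mul_mem (mul_mem hmem (sigma_mem_sigmaNonneg 0))
      (tailSubgroup_le_sigmaNonneg ((tailSubgroup m).inv_mem hh))

end SigmaNonnegative

section Mirror

variable {m i : ℕ}

/-- The mirror automorphism `σ_i ↦ σ_i⁻¹` of the braid group. -/
def mirror : BraidGroup m →* BraidGroup m :=
  braidLift (fun i ↦ (sigma i)⁻¹) (fun h ↦ (sigma_commute h).inv_inv) fun i hi ↦ by
    simpa [mul_assoc] using congrArg (·⁻¹) (sigma_braid hi)

lemma mirror_sigma (i : ℕ) : mirror (sigma i : BraidGroup m) = (sigma i)⁻¹ := by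
  rcases lt_or_ge i m with hi | hi
  · exact braidLift_sigma (hcomm := fun h ↦ (sigma_commute h).inv_inv) hi
  · simp [sigma_of_le hi]

lemma mirror_mk (w : List (Fin m × Bool)) :
    mirror (PresentedGroup.mk (braidRels m) (mk w)) =
      PresentedGroup.mk (braidRels m) (mk (w.map fun p ↦ (p.1, !p.2))) := by
  induction w with
  | nil => simp [← FreeGroup.one_eq_mk]
  | cons p w ih =>
    have hletter : mirror (PresentedGroup.mk (braidRels m) (mk [p])) =
        PresentedGroup.mk (braidRels m) (mk [(p.1, !p.2)]) := by
      obtain ⟨i, s⟩ := p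
      have hof : PresentedGroup.mk (braidRels m) (of i) = sigma i := (sigma_of_lt i.isLt).symm
      cases s
      · change mirror (PresentedGroup.mk _ (of i)⁻¹) = PresentedGroup.mk _ (of i)
        rw [map_inv, map_inv, hof, mirror_sigma, inv_inv]
      · change mirror (PresentedGroup.mk _ (of i)) = PresentedGroup.mk _ (of i)⁻¹
        rw [map_inv, hof, mirror_sigma]
    rw [← List.singleton_append, ← FreeGroup.mul_mk, map_mul, map_mul, ih, hletter, ← map_mul,
      FreeGroup.mul_mk]
    simp

lemma mirror_mirror (b : BraidGroup m) : mirror (mirror b) = b := by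
  induction b using braidGroup_induction with
  | one => simp
  | sigma_mul i _ b ih => simp [mirror_sigma, ih]
  | sigma_inv_mul i _ b ih => simp [mirror_sigma, ih]

/-- The involution of the free group intertwining the Artin action with its mirror image. It
inverts every `prefixProd k`. -/
def mirrorFree : FreeGroup ℕ →* FreeGroup ℕ :=
  FreeGroup.lift fun i ↦ prefixProd i * (prefixProd (i + 1))⁻¹

lemma mirrorFree_of (i : ℕ) : mirrorFree (of i) = prefixProd i * (prefixProd (i + 1))⁻¹ := by
  simp [mirrorFree]

lemma mirrorFree_prefixProd (k : ℕ) : mirrorFree (prefixProd k) = (prefixProd k)⁻¹ := by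
  induction k with
  | zero => simp [prefixProd_zero]
  | succ k ih => rw [prefixProd_succ, map_mul, ih, mirrorFree_of, inv_mul_cancel_left,
      prefixProd_succ]

lemma mirrorFree_mirrorFree (g : FreeGroup ℕ) : mirrorFree (mirrorFree g) = g := by
  suffices h : mirrorFree.comp mirrorFree = MonoidHom.id _ from DFunLike.congr_fun h g
  ext i
  simp [mirrorFree_of, mirrorFree_prefixProd, prefixProd_succ]

lemma mirrorFree_eq_one_iff {g : FreeGroup ℕ} : mirrorFree g = 1 ↔ g = 1 :=
  (Function.Involutive.injective mirrorFree_mirrorFree).eq_iff' (map_one _)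

lemma mirrorFree_sigma_smul_of (hi : i < m) (j : ℕ) :
    mirrorFree ((sigma i : BraidGroup m) • of j) =
      (sigma i : BraidGroup m)⁻¹ • mirrorFree (of j) := by
  have hfix {k : ℕ} (hk : k ≠ i + 1) :
      (sigma i : BraidGroup m)⁻¹ • prefixProd k = prefixProd k := by
    rw [inv_smul_eq_iff, sigma_smul_prefixProd hk]
  have hmove : (sigma i : BraidGroup m)⁻¹ • prefixProd (i + 1) = prefixProd i * of (i + 1) := by
    rw [prefixProd_succ, smul_mul', hfix (by omega), sigma_inv_smul_of_self hi]
  rw [mirrorFree_of, smul_mul', smul_inv']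
  rcases eq_or_ne j i with rfl | hji
  · rw [hfix (by omega), hmove, sigma_smul_of_self hi]
    simp [mirrorFree_of, prefixProd_succ, mul_assoc]
  rcases eq_or_ne j (i + 1) with rfl | hjs
  · rw [hmove, hfix (by omega), sigma_smul_of_succ hi]
    simp [mirrorFree_of, prefixProd_succ, mul_assoc]
  · rw [hfix hjs, hfix (by omega), sigma_smul_of_of_ne hji hjs, mirrorFree_of]

lemma mirrorFree_sigma_smul (hi : i < m) (g : FreeGroup ℕ) :
    mirrorFree ((sigma i : BraidGroup m) • g) = (sigma i : BraidGroup m)⁻¹ • mirrorFree g := by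
  suffices h : mirrorFree.comp (MulDistribMulAction.toMonoidHom _ (sigma i : BraidGroup m)) =
      (MulDistribMulAction.toMonoidHom _ (sigma i : BraidGroup m)⁻¹).comp mirrorFree from
    DFunLike.congr_fun h g
  ext j
  exact mirrorFree_sigma_smul_of hi j

lemma mirrorFree_smul (b : BraidGroup m) (g : FreeGroup ℕ) :
    mirrorFree (b • g) = mirror b • mirrorFree g := by
  induction b using braidGroup_induction with
  | one => simp
  | sigma_mul i hi b ih =>
    rw [mul_smul, mirrorFree_sigma_smul hi, ih, map_mul, mirror_sigma, mul_smul]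
  | sigma_inv_mul i hi b ih =>
    rw [mul_smul, map_mul, map_inv, mirror_sigma, mul_smul, ← ih, inv_inv, ← inv_smul_eq_iff,
      ← mirrorFree_sigma_smul hi, smul_inv_smul]

end Mirror

section Dichotomy

variable {g : FreeGroup ℕ}

lemma mul_prefixProd_succ_mem_startsWith_iff (k : ℕ) :
    g * prefixProd (k + 1) ∈ startsWith (0, true) ↔ g ∈ startsWith (0, true) ∨ g = 1 := by
  rw [prefixProd_succ_eq_of_zero_mul, ← mul_assoc, mul_prod_of_mem_startsWith_iff (by simp),
    mul_of_mem_startsWith_iff]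
  simp

/-- Exactly one of `g` and its mirror image starts with `x_0`, where the mirror image of `1` is
counted as starting with `x_0`. -/
def MirrorDichotomy (g : FreeGroup ℕ) : Prop :=
  (mirrorFree g ∈ startsWith (0, true) ∨ g = 1) ↔ g ∉ startsWith (0, true)

lemma mirrorDichotomy_mul_of_iff (i : ℕ) : MirrorDichotomy (g * of i) ↔ MirrorDichotomy g := by
  have hmirror : mirrorFree (g * of i) ∈ startsWith (0, true) ∨ g * of i = 1 ↔
      mirrorFree g * prefixProd i ∈ startsWith (0, true) := by
    rw [← mirrorFree_eq_one_iff, ← mul_prefixProd_succ_mem_startsWith_iff i, map_mul,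
      mirrorFree_of, mul_assoc, inv_mul_cancel_right]
  rw [MirrorDichotomy, MirrorDichotomy, hmirror, mul_of_mem_startsWith_iff]
  rcases i with _ | i
  · by_cases hg : g = 1 <;> simp [prefixProd_zero, hg, startsWith]
  · simp [mul_prefixProd_succ_mem_startsWith_iff, mirrorFree_eq_one_iff]

lemma mirrorDichotomy (g : FreeGroup ℕ) : MirrorDichotomy g := by
  suffices h : ∀ a, MirrorDichotomy (a * g) ↔ MirrorDichotomy a by
    rw [← one_mul g, h]
    simp [MirrorDichotomy, startsWith]
  induction g using FreeGroup.induction_on with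
  | C1 => simp
  | of i => exact fun a ↦ mirrorDichotomy_mul_of_iff i
  | inv_of i _ => exact fun a ↦ by rw [← mirrorDichotomy_mul_of_iff i, inv_mul_cancel_right]
  | mul g h hg hh => exact fun a ↦ by rw [← mul_assoc, hh, hg]

variable {m : ℕ} {b : BraidGroup m}

lemma mirror_smul_of_zero_mem_startsWith (hb : b • of 0 ∉ startsWith (0, true)) :
    mirror b • of 0 ∈ startsWith (0, true) := by
  have hmirror : mirror b • of 0 = mirrorFree (b • of 0)⁻¹ := by
    rw [← smul_inv', mirrorFree_smul]
    simp [mirrorFree_of, prefixProd_succ, prefixProd_zero]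
  obtain ⟨c, hlast, hc⟩ := exists_lastNe_conjOf_eq_smul_of b 0
  have hinv : (b • of 0)⁻¹ ∉ startsWith (0, true) := by
    rw [← hc] at hb ⊢
    exact mt hlast.conj_mem_startsWith_of_inv hb
  have hne : (b • of 0 : FreeGroup ℕ)⁻¹ ≠ 1 := by
    rw [Ne, inv_eq_one, smul_eq_iff_eq_inv_smul, smul_one]
    exact FreeGroup.of_ne_one 0
  rw [hmirror]
  exact ((mirrorDichotomy _).2 hinv).resolve_right hne

end Dichotomy

end Dehornoy

/-- **Dehornoy's theorem, part (a).** Every braid word in `σ_1, …, σ_{n-1}` (a word in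
the letters `σ_i^{±1}`, here a list of pairs `(i, ε)` with `ε = true` for a positive
letter) is equivalent — i.e. represents the same element of the braid group `B_n` —
to a braid word that is either `σ_1`-nonnegative (no occurrence of `σ_1⁻¹`) or
`σ_1`-negative (no occurrence of `σ_1` with positive exponent). -/
theorem dehornoy_sigma1_trichotomy (n : ℕ) (hn : 2 ≤ n)
    (w : List (Fin (n - 1) × Bool)) :
    ∃ w' : List (Fin (n - 1) × Bool),
      PresentedGroup.mk (braidRels (n - 1)) (FreeGroup.mk w) =
        PresentedGroup.mk (braidRels (n - 1)) (FreeGroup.mk w') ∧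
      ((∀ p ∈ w', p ≠ ((⟨0, by omega⟩ : Fin (n - 1)), false)) ∨
       (∀ p ∈ w', p ≠ ((⟨0, by omega⟩ : Fin (n - 1)), true))) := by
  set b := PresentedGroup.mk (braidRels (n - 1)) (FreeGroup.mk w)
  by_cases hstart : b • FreeGroup.of 0 ∈ FreeGroup.startsWith (0, true)
  · obtain ⟨w', hw', hmk⟩ :=
      Dehornoy.mem_sigmaNonneg_of_smul_of_zero_mem_startsWith (by omega) hstart
    refine ⟨w', hmk.symm, .inl fun p hp hneg ↦ ?_⟩
    simpa [hneg] using hw' p hp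
  · obtain ⟨w', hw', hmk⟩ := Dehornoy.mem_sigmaNonneg_of_smul_of_zero_mem_startsWith (by omega)
      (Dehornoy.mirror_smul_of_zero_mem_startsWith hstart)
    refine ⟨w'.map fun p ↦ (p.1, !p.2), ?_, .inr fun p hp hpos ↦ ?_⟩
    · rw [← Dehornoy.mirror_mk, hmk, Dehornoy.mirror_mirror]
    · obtain ⟨q, hq, rfl⟩ := List.mem_map.1 hp
      have := hw' q hq
      simp_all
end

section
/- (Dehornoy) If u is a σ_1-nonnegative braid word containing at least one occurrence of σ_1, then u is not equivalent to the empty word, i.e., u represents a nontrivial element of the braid group B_n. -/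
/-!
Larue's argument. The braid group acts on a free group by Artin's automorphisms: `σ_i` sends `x_i`
to `x_i x_{i+1} x_i⁻¹` and `x_{i+1}` to `x_i`. Consider the reduced words whose first letter is
`x_k` or `x_k⁻¹`. Any `σ_i^{±1}` that fixes `x_k` preserves this first letter, while `σ_k` turns it
into `x_k`. Hence a word that contains `σ_k`, but neither `σ_k⁻¹` nor `σ_{k-1}^{±1}`, sends `x_k⁻¹`
to an element whose reduced word begins with `x_k`, and so acts nontrivially.
-/

namespace Dehornoy

open FreeGroup hiding map_mul map_inv

section FirstLetter

variable {α β : Type*}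

/-- The subgroup of the free group on `α` generated by all free generators other than `s`, that is,
the set of elements whose reduced words contain neither `s` nor its inverse. -/
def avoiding (s : α) : Subgroup (FreeGroup α) :=
  Subgroup.closure (of '' {s}ᶜ)

theorem of_mem_avoiding {a s : α} (h : a ≠ s) : of a ∈ avoiding s :=
  Subgroup.subset_closure ⟨a, h, rfl⟩

theorem mk_singleton_mem_avoiding {p : α × Bool} {s : α} (h : p.1 ≠ s) :
    mk [p] ∈ avoiding s := by
  obtain ⟨a, _ | _⟩ := p
  · exact inv_mem (of_mem_avoiding h)
  · exact of_mem_avoiding h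

theorem mk_cons (p : α × Bool) (L : List (α × Bool)) : mk (p :: L) = mk [p] * mk L :=
  (mul_mk (L₁ := [p])).symm

theorem map_mk_singleton {θ : FreeGroup α →* FreeGroup β} {t : α} {s : β}
    (ht : θ (of t) = of s) (e : Bool) : θ (mk [(t, e)]) = mk [(s, e)] := by
  cases e
  · exact (map_inv θ (of t)).trans (congrArg (·⁻¹) ht)
  · exact ht

theorem map_mem_avoiding {θ : FreeGroup α →* FreeGroup β} {t : α} {s : β}
    (hθ : ∀ j ≠ t, θ (of j) ∈ avoiding s) {k : FreeGroup α} (hk : k ∈ avoiding t) :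
    θ k ∈ avoiding s := by
  have hle : avoiding t ≤ (avoiding s).comap θ :=
    (Subgroup.closure_le _).2 (Set.forall_mem_image.2 hθ)
  exact hle hk

variable [DecidableEq α] [DecidableEq β]

theorem fst_ne_of_mem_avoiding {s : α} {g : FreeGroup α} (hg : g ∈ avoiding s) :
    ∀ p ∈ g.toWord, p.1 ≠ s := by
  induction hg using Subgroup.closure_induction with
  | mem _ h =>
    obtain ⟨a, ha, rfl⟩ := h
    simpa using ha
  | one => simp
  | mul x y _ _ hx hy =>
    intro p hp
    exact (List.mem_append.1 ((toWord_mul_sublist x y).subset hp)).elim (hx p) (hy p)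
  | inv x _ hx =>
    intro p hp
    rw [toWord_inv, invRev, List.mem_reverse, List.mem_map] at hp
    obtain ⟨q, hq, rfl⟩ := hp
    exact hx q hq

theorem notMem_startsWith_of_mem_avoiding {s : α} {g : FreeGroup α} (hg : g ∈ avoiding s)
    (e : Bool) : g ∉ startsWith (s, e) :=
  fun h => fst_ne_of_mem_avoiding hg _ (List.mem_of_getElem? h) rfl

theorem notMem_startsWith_of_isReduced_cons {t : α} {e : Bool} {L : List (α × Bool)}
    (h : IsReduced ((t, e) :: L)) : mk L ∉ startsWith (t, !e) := by
  cases L with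
  | nil => exact fun h1 => startsWith.ne_one _ h1 one_eq_mk.symm
  | cons q L =>
    obtain ⟨hq, hL⟩ := isReduced_cons_cons.1 h
    intro hmem
    have hhead : q = (t, !e) := by simpa [startsWith, hL.reduce_eq] using hmem
    simp [hhead] at hq

theorem toWord_mul_of_mem_avoiding {s : α} {e : Bool} {k g : FreeGroup α} (hk : k ∈ avoiding s)
    (hg : g ∈ startsWith (s, e)) : (k * g).toWord = k.toWord ++ g.toWord := by
  have hreduced : IsReduced (k.toWord ++ g.toWord) := by
    refine List.IsChain.append isReduced_toWord isReduced_toWord ?_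
    intro x hx y hy hxy
    have hys : y = (s, e) := by
      rw [List.head?_eq_getElem?, hg] at hy
      simpa using hy.symm
    have hxs : x.1 ≠ s := fst_ne_of_mem_avoiding hk x (List.mem_of_mem_getLast? hx)
    exact absurd (hxy.trans (by rw [hys])) hxs
  rw [toWord_mul, hreduced.reduce_eq]

theorem mul_mem_startsWith_iff {s : α} {e d : Bool} {k g : FreeGroup α} (hk : k ∈ avoiding s)
    (hg : g ∈ startsWith (s, e)) : k * g ∈ startsWith (s, d) ↔ k = 1 ∧ e = d := by
  have hword := toWord_mul_of_mem_avoiding hk hg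
  rw [startsWith, Set.mem_ofPred_eq] at hg ⊢
  rw [hword, ← toWord_eq_nil_iff]
  cases hL : k.toWord with
  | nil => simp [hg]
  | cons q L =>
    have hq : q.1 ≠ s := fst_ne_of_mem_avoiding hk q (by simp [hL])
    simpa using fun h : q = (s, d) => hq (congrArg Prod.fst h)

section

variable {θ : FreeGroup α →* FreeGroup β} {t : α} {s : β} {c : FreeGroup β}

-- Absorbing the letters other than `t` into `k` makes a plain induction on the word possible.
theorem map_mul_mk_mul_mem_startsWith_iff (hinj : Function.Injective θ) (ht : θ (of t) = of s)
    (hθ : ∀ j ≠ t, θ (of j) ∈ avoiding s) (hc : c ∈ avoiding s) {L : List (α × Bool)}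
    (hL : IsReduced L) {k : FreeGroup α} (hk : k ∈ avoiding t) (e : Bool) :
    θ (k * mk L) * c ∈ startsWith (s, e) ↔ k * mk L ∈ startsWith (t, e) := by
  induction L generalizing k e with
  | nil =>
    rw [← one_eq_mk, mul_one]
    exact iff_of_false
      (notMem_startsWith_of_mem_avoiding (mul_mem (map_mem_avoiding hθ hk) hc) e)
      (notMem_startsWith_of_mem_avoiding hk e)
  | cons p L ih =>
    replace ih := @ih hL.tail
    by_cases hp : p.1 = t
    · obtain ⟨i, b⟩ := p
      obtain rfl : i = t := hp
      have hL' := notMem_startsWith_of_isReduced_cons hL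
      have hθL : θ (mk L) * c ∉ startsWith (s, !b) := by
        simpa using (ih (one_mem _) (!b)).not.2 (by simpa using hL')
      rw [mk_cons, map_mul, map_mul, map_mk_singleton ht, mul_assoc, mul_assoc,
        mul_mem_startsWith_iff (map_mem_avoiding hθ hk) (startsWith_mk_mul (w := (s, b)) _ hθL),
        mul_mem_startsWith_iff hk (startsWith_mk_mul (w := (i, b)) _ hL'),
        map_eq_one_iff θ hinj]
    · rw [mk_cons, ← mul_assoc]
      exact ih (mul_mem hk (mk_singleton_mem_avoiding hp)) e

theorem map_mul_mem_startsWith_iff (hinj : Function.Injective θ) (ht : θ (of t) = of s)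
    (hθ : ∀ j ≠ t, θ (of j) ∈ avoiding s) (hc : c ∈ avoiding s) (g : FreeGroup α) (e : Bool) :
    θ g * c ∈ startsWith (s, e) ↔ g ∈ startsWith (t, e) := by
  simpa [mk_toWord] using
    map_mul_mk_mul_mem_startsWith_iff hinj ht hθ hc (isReduced_toWord (x := g)) (one_mem _) e

end

end FirstLetter

section Artin

variable {α : Type*}

theorem mulAut_ext {φ ψ : MulAut (FreeGroup α)} (h : ∀ a, φ (of a) = ψ (of a)) : φ = ψ :=
  MulEquiv.toMonoidHom_injective (FreeGroup.ext_hom _ _ h)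

variable [DecidableEq α]

/-- The automorphism of the free group by which Artin's representation lets a crossing of the
strands `a` and `b` act: `a ↦ a b a⁻¹` and `b ↦ a`, all other generators being fixed.
For `a = b` it is the identity. -/
def artin (a b : α) : MulAut (FreeGroup α) :=
  MonoidHom.toMulEquiv
    (lift fun c => if c = a then of a * of b * (of a)⁻¹ else if c = b then of a else of c)
    (lift fun c => if c = a then of b else if c = b then (of b)⁻¹ * of a * of b else of c)
    (by
      ext c
      by_cases hca : c = a <;> by_cases hcb : c = b <;> by_cases hba : b = a <;>
        simp_all [mul_assoc])
    (by
      ext c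
      by_cases hca : c = a <;> by_cases hcb : c = b <;> by_cases hba : b = a <;>
        simp_all [mul_assoc])

theorem artin_apply_left (a b : α) : artin a b (of a) = of a * of b * (of a)⁻¹ := by
  simp [artin]

theorem artin_apply_right (a b : α) : artin a b (of b) = of a := by
  by_cases h : b = a <;> simp [artin, h]

theorem artin_apply_of_ne {a b c : α} (hca : c ≠ a) (hcb : c ≠ b) : artin a b (of c) = of c := by
  simp [artin, hca, hcb]

theorem artin_commute {a b c d : α} (hac : a ≠ c) (had : a ≠ d) (hbc : b ≠ c) (hbd : b ≠ d) :
    Commute (artin a b) (artin c d) := by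
  refine mulAut_ext fun x => ?_
  rw [MulAut.mul_apply, MulAut.mul_apply]
  by_cases hxa : x = a
  · simp [artin_apply_left, artin_apply_of_ne, *]
  by_cases hxb : x = b
  · simp [artin_apply_right, artin_apply_of_ne, *]
  by_cases hxc : x = c
  · simp [hxc, artin_apply_left, artin_apply_of_ne, hac.symm, had.symm, hbc.symm, hbd.symm]
  by_cases hxd : x = d
  · simp [hxd, artin_apply_right, artin_apply_of_ne, hac.symm, had.symm, hbc.symm, hbd.symm]
  simp [artin_apply_of_ne, *]

theorem artin_braid {a b c : α} (hab : a ≠ b) (hac : a ≠ c) (hbc : b ≠ c) :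
    artin a b * artin b c * artin a b = artin b c * artin a b * artin b c := by
  have hfix_a : artin b c (of a) = of a := artin_apply_of_ne hab hac
  have hfix_c : artin a b (of c) = of c := artin_apply_of_ne hac.symm hbc.symm
  refine mulAut_ext fun x => ?_
  simp only [MulAut.mul_apply]
  by_cases hxa : x = a
  · simp [hxa, artin_apply_left, artin_apply_right, hfix_a, hfix_c, mul_assoc]
  by_cases hxb : x = b
  · simp [hxb, artin_apply_left, artin_apply_right, hfix_a, hfix_c]
  by_cases hxc : x = c
  · simp [hxc, artin_apply_right, hfix_a, hfix_c]
  simp [artin_apply_of_ne, *]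

theorem artin_mem_startsWith_iff {a b s : α} (hsa : s ≠ a) (hsb : s ≠ b) (g : FreeGroup α)
    (e : Bool) : artin a b g ∈ startsWith (s, e) ↔ g ∈ startsWith (s, e) := by
  have havoid : ∀ j ≠ s, artin a b (of j) ∈ avoiding s := by
    intro j hj
    have ha : of a ∈ avoiding s := of_mem_avoiding hsa.symm
    by_cases hja : j = a
    · rw [hja, artin_apply_left]
      exact mul_mem (mul_mem ha (of_mem_avoiding hsb.symm)) (inv_mem ha)
    by_cases hjb : j = b
    · rwa [hjb, artin_apply_right]
    · rw [artin_apply_of_ne hja hjb]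
      exact of_mem_avoiding hj
  simpa using map_mul_mem_startsWith_iff (θ := (artin a b).toMonoidHom) (artin a b).injective
    (artin_apply_of_ne hsa hsb) havoid (one_mem _) g e

theorem artin_inv_mem_startsWith_iff {a b s : α} (hsa : s ≠ a) (hsb : s ≠ b) (g : FreeGroup α)
    (e : Bool) : (artin a b)⁻¹ g ∈ startsWith (s, e) ↔ g ∈ startsWith (s, e) := by
  rw [← artin_mem_startsWith_iff hsa hsb, MulAut.apply_inv_self]

-- Conjugated by `a`, the automorphism `artin a b` sends `a` to `b`. It thus turns the first letter
-- `a ^ ±1` into `b ^ ±1`, which cannot cancel the `a` that undoing the conjugation prepends.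
theorem artin_mem_startsWith {a b : α} (hab : a ≠ b) {g : FreeGroup α} {e : Bool}
    (hg : g ∈ startsWith (a, e)) : artin a b g ∈ startsWith (a, true) := by
  let θ : MulAut (FreeGroup α) := MulAut.conj (of a)⁻¹ * artin a b
  have hθ (x : FreeGroup α) : θ x = (of a)⁻¹ * artin a b x * of a := by simp [θ]
  have ha : of a ∈ avoiding b := of_mem_avoiding hab
  have hθa : θ (of a) = of b := by rw [hθ, artin_apply_left]; group
  have havoid : ∀ j ≠ a, θ (of j) ∈ avoiding b := by
    intro j hja
    rw [hθ]
    refine mul_mem (mul_mem (inv_mem ha) ?_) ha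
    by_cases hjb : j = b
    · rwa [hjb, artin_apply_right]
    · rw [artin_apply_of_ne hja hjb]
      exact of_mem_avoiding hjb
  have hb : θ g * (of a)⁻¹ ∈ startsWith (b, e) :=
    (map_mul_mem_startsWith_iff (θ := θ.toMonoidHom) θ.injective hθa havoid (inv_mem ha) g e).2 hg
  have ha_inv : θ g * (of a)⁻¹ ∉ startsWith (a, false) :=
    (startsWith.disjoint_iff_ne.2 (by simp [hab.symm])).notMem_of_mem_left hb
  have hconj : artin a b g = mk [(a, true)] * (θ g * (of a)⁻¹) := by
    rw [hθ, ← of]; group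
  exact hconj ▸ startsWith_mk_mul _ ha_inv

end Artin

section BraidGroup

variable {m : ℕ}

theorem lift_artin_eq_one_of_mem_braidRels :
    ∀ r ∈ braidRels m, lift (fun i : Fin m => artin i.castSucc i.succ) r = 1 := by
  rintro r (⟨i, j, hij, rfl⟩ | ⟨i, j, hij, rfl⟩)
  · have hcomm : Commute (artin i.castSucc i.succ) (artin j.castSucc j.succ) := by
      apply artin_commute <;>
        simp only [ne_eq, Fin.ext_iff, Fin.val_castSucc, Fin.val_succ] <;> omega
    simp only [map_mul, map_inv, lift_apply_of]
    rw [hcomm.eq, mul_inv_cancel_right, mul_inv_cancel]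
  · have hj : j.castSucc = i.succ := Fin.ext hij.symm
    simp only [map_mul, map_inv, lift_apply_of, hj]
    rw [artin_braid, mul_inv_cancel] <;>
      simp only [ne_eq, Fin.ext_iff, Fin.val_castSucc, Fin.val_succ] <;> omega

/-- Artin's representation of the braid group on `m + 1` strands, letting `σ_i` act on the free
group of rank `m + 1` by `artin` at the adjacent generators `i` and `i + 1`. -/
def artinAction (m : ℕ) : PresentedGroup (braidRels m) →* MulAut (FreeGroup (Fin (m + 1))) :=
  PresentedGroup.toGroup lift_artin_eq_one_of_mem_braidRels

theorem artinAction_mk_cons (i : Fin m) (b : Bool) (u : List (Fin m × Bool))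
    (g : FreeGroup (Fin (m + 1))) :
    artinAction m (PresentedGroup.mk _ (mk ((i, b) :: u))) g =
      (cond b (artin i.castSucc i.succ) (artin i.castSucc i.succ)⁻¹)
        (artinAction m (PresentedGroup.mk _ (mk u)) g) :=
  rfl

theorem artinAction_mem_startsWith {k : Fin m} {u : List (Fin m × Bool)}
    (hpred : ∀ p ∈ u, (p.1 : ℕ) + 1 ≠ k) (hneg : (k, false) ∉ u) {g : FreeGroup (Fin (m + 1))}
    {e : Bool} (hg : g ∈ startsWith (k.castSucc, e)) :
    artinAction m (PresentedGroup.mk _ (mk u)) g ∈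
      startsWith (k.castSucc, e || decide ((k, true) ∈ u)) := by
  induction u with
  | nil => simpa [← one_eq_mk] using hg
  | cons p u ih =>
    obtain ⟨i, b⟩ := p
    replace ih := ih (fun q hq => hpred q (List.mem_cons_of_mem _ hq))
      fun h => hneg (List.mem_cons_of_mem _ h)
    rw [artinAction_mk_cons]
    by_cases hik : i = k
    · subst hik
      cases b with
      | false => exact absurd List.mem_cons_self hneg
      | true => simpa using artin_mem_startsWith Fin.castSucc_lt_succ.ne ih
    · have hcast : k.castSucc ≠ i.castSucc := fun h => hik (Fin.castSucc_injective m h).symm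
      have hsucc : k.castSucc ≠ i.succ := fun h =>
        hpred _ List.mem_cons_self (congrArg Fin.val h).symm
      have hmem : (k, true) ∈ (i, b) :: u ↔ (k, true) ∈ u := by simp [Ne.symm hik]
      simp only [hmem]
      cases b with
      | false => exact (artin_inv_mem_startsWith_iff hcast hsucc _ _).2 ih
      | true => exact (artin_mem_startsWith_iff hcast hsucc _ _).2 ih

end BraidGroup

end Dehornoy

theorem dehornoy_sigma1_positive_nontrivial_general {m : ℕ} (k : Fin m)
    (u : List (Fin m × Bool)) (hpred : ∀ p ∈ u, (p.1 : ℕ) + 1 ≠ k)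
    (hneg : (k, false) ∉ u) (hpos : (k, true) ∈ u) :
    PresentedGroup.mk (braidRels m) (FreeGroup.mk u) ≠ 1 := by
  intro htrivial
  have hinv : (FreeGroup.of k.castSucc)⁻¹ ∈ FreeGroup.startsWith (k.castSucc, false) := rfl
  have himage := Dehornoy.artinAction_mem_startsWith hpred hneg hinv
  rw [htrivial, map_one, MulAut.one_apply] at himage
  have hdisjoint := FreeGroup.startsWith.disjoint_iff_ne.2
    (show (k.castSucc, false) ≠ (k.castSucc, false || decide ((k, true) ∈ u)) by simp [hpos])
  exact hdisjoint.notMem_of_mem_left hinv himage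

/-- **Dehornoy's theorem, part (b).** If `u` is a `σ_1`-nonnegative braid word (no
occurrence of `σ_1⁻¹`) containing at least one occurrence of `σ_1`, then `u`
represents a nontrivial element of the braid group `B_n`. -/
theorem dehornoy_sigma1_positive_nontrivial (n : ℕ) (hn : 2 ≤ n)
    (u : List (Fin (n - 1) × Bool))
    (hnonneg : ∀ p ∈ u, p ≠ ((⟨0, by omega⟩ : Fin (n - 1)), false))
    (hocc : ((⟨0, by omega⟩ : Fin (n - 1)), true) ∈ u) :
    PresentedGroup.mk (braidRels (n - 1)) (FreeGroup.mk u) ≠ 1 := by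
  exact dehornoy_sigma1_positive_nontrivial_general _ u (fun _ _ => Nat.succ_ne_zero _)
    (fun h => hnonneg _ h rfl) hocc
end
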